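/- arXiv:2106.07249 — 2 statements merged into one kernel-verified Lean document; each statement's English description precedes it below -/
import Mathlib

section
/- Let S = (L, ≺) be an addable abstract numeration system, let x be an S-automatic infinite word over a finite alphabet C that has sublinear factor complexity, and let X = O(x) be the subshift generated by x. Then the winning shift W(X) ⊆ ℕ^ℕ is S-codable, i.e., W(X) is weakly S-codable and has finite coding dimension. -/
open scoped BigOperators

/-- A language is regular if it is accepted by a DFA with finitely many states. -/
def IsRegularLang {α : Type*} (L : Set (List α)) : Prop :=
  ∃ (σ : Type) (_ : Fintype σ) (M : DFA α σ), ∀ w : List α, w ∈ M.accepts ↔ w ∈ L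

/-- Pad a word over `A` to length `M` by prepending the padding symbol `none`. -/
def padOne {A : Type*} (M : ℕ) (w : List A) : List (Option A) :=
  List.replicate (M - w.length) none ++ w.map some

/-- The padded form of a `d`-tuple of words over `A`, as a word over `(A ∪ {#})^d`. -/
def padTuple {A : Type*} {d : ℕ} (ws : Fin d → List A) : List (Fin d → Option A) :=
  List.ofFn fun j : Fin (Finset.univ.sup fun i : Fin d => (ws i).length) =>
    fun i : Fin d =>
      (padOne (Finset.univ.sup fun i : Fin d => (ws i).length) (ws i)).getD j.val none

/-- An abstract numeration system over the alphabet `A`, encoded by the order isomorphism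
`rep : ℕ → L ⊆ A*` enumerating its (infinite) language in increasing order. -/
structure ANS (A : Type*) where
  rep : ℕ → List A
  inj : Function.Injective rep

/-- A set `Y ⊆ ℕ^d` is `S`-recognizable if the padded representations of its members form
a regular language. -/
def ANS.Recognizable {A : Type*} (S : ANS A) {d : ℕ} (Y : Set (Fin d → ℕ)) : Prop :=
  IsRegularLang { w : List (Fin d → Option A) | ∃ t ∈ Y, w = padTuple fun i => S.rep (t i) }

/-- An ANS is addable if the graph of addition is `S`-recognizable. -/
def ANS.Addable {A : Type*} (S : ANS A) : Prop :=
  S.Recognizable { t : Fin 3 → ℕ | t 0 + t 1 = t 2 }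

/-- An ANS is comparable if the relation `≤` is `S`-recognizable. -/
def ANS.Comparable {A : Type*} (S : ANS A) : Prop :=
  S.Recognizable { t : Fin 2 → ℕ | t 0 ≤ t 1 }

/-- An ANS is regular if `ℕ` (i.e. its language) is `S`-recognizable. -/
def ANS.IsRegularANS {A : Type*} (S : ANS A) : Prop :=
  S.Recognizable (Set.univ : Set (Fin 1 → ℕ))

/-- The unary ANS, with language `0*` ordered by length. -/
def unaryANS : ANS Unit where
  rep := fun n => List.replicate n ()
  inj := fun m n h => by simpa using congrArg List.length h

/-- `x` is `S`-automatic: some DFAO outputs `x n` on input `rep_S n`. -/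
def SAutomatic {A C : Type*} (S : ANS A) (x : ℕ → C) : Prop :=
  ∃ (Q : Type) (_ : Fintype Q) (M : DFA A Q) (τ : Q → C),
    ∀ n : ℕ, τ (M.eval (S.rep n)) = x n

/-- The shift map on one-sided infinite words. -/
def shiftMap {C : Type*} (x : ℕ → C) : ℕ → C := fun n => x (n + 1)

/-- The orbit closure of `x` (closure in the product topology over the discrete alphabet):
`y` belongs to it iff every finite prefix of `y` occurs in `x`. -/
def orbitClosure {C : Type*} (x : ℕ → C) : Set (ℕ → C) :=
  { y | ∀ n : ℕ, ∃ m : ℕ, ∀ i < n, y i = x (m + i) }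

/-- A subshift: a shift-invariant subset of `C^ℕ` that is closed in the product topology
over the discrete alphabet (expressed combinatorially). -/
def IsSubshift {C : Type*} (X : Set (ℕ → C)) : Prop :=
  (∀ x ∈ X, shiftMap x ∈ X) ∧
  ∀ y : ℕ → C, (∀ n : ℕ, ∃ x ∈ X, ∀ i < n, y i = x i) → y ∈ X

/-- The language of a set of infinite words: all finite factors of its elements. -/
def LangOf {C : Type*} (X : Set (ℕ → C)) : Set (List C) :=
  { w | ∃ x ∈ X, ∃ p : ℕ, w = List.ofFn fun i : Fin w.length => x (p + i) }

/-- A word is right special in (the language of) `X` if it has two distinct one-letter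
extensions in the language of `X`. -/
def RightSpecial {C : Type*} (X : Set (ℕ → C)) (w : List C) : Prop :=
  ∃ a b : C, a ≠ b ∧ w ++ [a] ∈ LangOf X ∧ w ++ [b] ∈ LangOf X

/-- The factor complexity of `x`: the number of distinct factors of length `n`. -/
noncomputable def factorComplexity {C : Type*} (x : ℕ → C) (n : ℕ) : ℕ :=
  Set.ncard { w : List C | ∃ p : ℕ, w = List.ofFn fun i : Fin n => x (p + i) }

/-- `T` is a strategy tree witnessing `α ∈ W(X)`: a prefix-closed set of finite words
containing the empty word, in which every word of length `i` has exactly `α i + 1`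
one-letter extensions, and all whose infinite branches lie in `X`. -/
def IsStrategyTree {C : Type*} (X : Set (ℕ → C)) (α : ℕ → ℕ) (T : Set (List C)) : Prop :=
  ([] : List C) ∈ T ∧
  (∀ u v : List C, u ++ v ∈ T → u ∈ T) ∧
  (∀ w ∈ T, Set.ncard { c : C | w ++ [c] ∈ T } = α w.length + 1) ∧
  (∀ y : ℕ → C, (∀ n : ℕ, (List.ofFn fun i : Fin n => y i) ∈ T) → y ∈ X)

/-- The winning shift of `X ⊆ C^ℕ`, a subset of `ℕ^ℕ`. -/
def winningShift {C : Type*} (X : Set (ℕ → C)) : Set (ℕ → ℕ) :=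
  { α | ∃ T : Set (List C), IsStrategyTree X α T }

/-- Membership in the winning set of a set `X` of finite words, defined recursively:
`ε ∈ W(X)` iff `ε ∈ X`, and `a :: α ∈ W(X)` iff there is a set of `a + 1` letters `c`
such that `α` is in the winning set of the left quotient of `X` by `c`. -/
def winningSetMem {C : Type*} : List ℕ → Set (List C) → Prop
  | [], X => [] ∈ X
  | a :: α, X => ∃ S : Finset C, S.card = a + 1 ∧ ∀ c ∈ S, winningSetMem α { w | c :: w ∈ X }

/-- `Σ y = m`: the sum of the letters of `y ∈ ℕ^ℕ` is finite and equals `m`. -/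
def sumEq (y : ℕ → ℕ) (m : ℕ) : Prop :=
  (Function.support y).Finite ∧ ∑ᶠ i, y i = m

/-- `Y ⊆ ℕ^ℕ` has finite coding dimension: the sums `Σ y`, `y ∈ Y`, are uniformly bounded. -/
def FiniteCodingDim (Y : Set (ℕ → ℕ)) : Prop :=
  ∃ d : ℕ, ∀ y ∈ Y, ∀ F : Finset ℕ, ∑ i ∈ F, y i ≤ d

/-- The set `{ν(y) : y ∈ Y, Σy = k} ⊆ ℕᵏ`: nondecreasing `k`-tuples `t` such that the word
whose letter at `j` is the number of occurrences of `j` in `t` belongs to `Y`. -/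
def nuSet (Y : Set (ℕ → ℕ)) (k : ℕ) : Set (Fin k → ℕ) :=
  { t | Monotone t ∧ (fun j => Set.ncard { i : Fin k | t i = j }) ∈ Y }

/-- `Y ⊆ ℕ^ℕ` is weakly `S`-codable if `{ν(y) : y ∈ Y, Σy = k}` is `S`-recognizable for
every `k`. -/
def WeaklySCodable {A : Type*} (S : ANS A) (Y : Set (ℕ → ℕ)) : Prop :=
  ∀ k : ℕ, S.Recognizable (nuSet Y k)

/-- `Y ⊆ ℕ^ℕ` is `S`-codable if it is weakly `S`-codable and has finite coding dimension. -/
def SCodable {A : Type*} (S : ANS A) (Y : Set (ℕ → ℕ)) : Prop :=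
  WeaklySCodable S Y ∧ FiniteCodingDim Y

/-- `P_{111}(Y)`: strictly increasing triples `(a, b, c)` such that the word with letter `1`
exactly at positions `a`, `b`, `c` and `0` elsewhere belongs to `Y`. -/
def P111 (Y : Set (ℕ → ℕ)) : Set (Fin 3 → ℕ) :=
  { t | t 0 < t 1 ∧ t 1 < t 2 ∧
        (fun j => if j = t 0 ∨ j = t 1 ∨ j = t 2 then 1 else 0) ∈ Y }

/-- `P_v(Y)` for a finite word `v` over `ℕ`: strictly increasing tuples `n` such that the
word with letter `v i` at position `n i` and `0` elsewhere belongs to `Y`. -/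
def PvSet (v : List ℕ) (Y : Set (ℕ → ℕ)) : Set (Fin v.length → ℕ) :=
  { n | StrictMono n ∧
        (fun j => ∑ i : Fin v.length, if n i = j then v.get i else 0) ∈ Y }

/-- `X` is sofic: the set of label sequences of right-infinite paths in a finite
edge-labeled graph. -/
def IsSofic {C : Type*} (X : Set (ℕ → C)) : Prop :=
  ∃ (V : Type) (_ : Fintype V) (E : Set (V × C × V)),
    X = { x | ∃ p : ℕ → V, ∀ n : ℕ, (p n, x n, p (n + 1)) ∈ E }

/-- The factor `x[a..b-1]` of an infinite word. -/
def segmentOf {C : Type*} (x : ℕ → C) (a b : ℕ) : List C :=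
  List.ofFn fun i : Fin (b - a) => x (a + i)

/-- `U · V^ω`: infinite words that decompose as a word of `U` followed by infinitely many
nonempty words of `V`. -/
def omegaIter {C : Type*} (U V : Set (List C)) : Set (ℕ → C) :=
  { x | ∃ k : ℕ → ℕ, StrictMono k ∧ segmentOf x 0 (k 0) ∈ U ∧
        ∀ i : ℕ, segmentOf x (k i) (k (i + 1)) ∈ V }

/-- `X ⊆ C^ℕ` is ω-regular: a finite union of sets `U · V^ω` with `U`, `V` regular. -/
def IsOmegaRegular {C : Type*} (X : Set (ℕ → C)) : Prop :=
  ∃ (n : ℕ) (U V : Fin n → Set (List C)),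
    (∀ i, IsRegularLang (U i) ∧ IsRegularLang (V i)) ∧
    X = ⋃ i, omegaIter (U i) (V i)

/-- The words `p₁ = a`, `p_{k+1} = p_k bᵏ p_k` (with `a = false`, `b = true`). -/
def pWord : ℕ → List Bool
  | 0 => []
  | 1 => [false]
  | (k + 2) => pWord (k + 1) ++ List.replicate (k + 1) true ++ pWord (k + 1)

/-- Combinatorial continuity of `φ` on `Y` for product topologies over discrete alphabets:
every finite prefix of `φ y` is determined by a finite prefix of `y`. -/
def ContOn {B C : Type*} (φ : (ℕ → B) → (ℕ → C)) (Y : Set (ℕ → B)) : Prop :=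
  ∀ y ∈ Y, ∀ n : ℕ, ∃ m : ℕ, ∀ y' ∈ Y, (∀ i < m, y' i = y i) → ∀ i < n, φ y' i = φ y i


section RegLang

theorem IsRegularLang.congr' {α : Type*} {L L' : Set (List α)} (h : IsRegularLang L)
    (e : ∀ w, w ∈ L ↔ w ∈ L') : IsRegularLang L' := by
  obtain ⟨σ, f, M, hM⟩ := h
  exact ⟨σ, f, M, fun w => (hM w).trans (e w)⟩

theorem IsRegularLang.compl' {α : Type*} {L : Set (List α)} (h : IsRegularLang L) :
    IsRegularLang {w | w ∉ L} := by
  obtain ⟨σ, f, M, hM⟩ := h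
  refine ⟨σ, f, Mᶜ, fun w => ?_⟩
  rw [DFA.accepts_compl]
  exact not_congr (hM w)

theorem IsRegularLang.inter' {α : Type*} {L L' : Set (List α)} (h : IsRegularLang L)
    (h' : IsRegularLang L') : IsRegularLang {w | w ∈ L ∧ w ∈ L'} := by
  obtain ⟨σ, f, M, hM⟩ := h
  obtain ⟨σ', f', M', hM'⟩ := h'
  refine ⟨σ × σ', inferInstance, M.inter M', fun w => ?_⟩
  rw [DFA.accepts_inter]
  exact and_congr (hM w) (hM' w)

theorem IsRegularLang.univ' {α : Type*} : IsRegularLang {_w : List α | True} :=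
  ⟨Unit, inferInstance, ⟨fun _ _ => (), (), Set.univ⟩, fun w => by simp [DFA.mem_accepts]⟩

theorem IsRegularLang.finInter {α β : Type*} (s : Finset β) {L : β → Set (List α)}
    (h : ∀ b, IsRegularLang (L b)) : IsRegularLang {w | ∀ b ∈ s, w ∈ L b} := by
  classical
  induction s using Finset.induction_on with
  | empty => exact IsRegularLang.univ'.congr' (by simp)
  | insert a s _ ih => exact ((h a).inter' ih).congr' (by simp)

theorem IsRegularLang.comap' {α β : Type*} {L : Set (List α)} (h : IsRegularLang L) (g : β → α) :
    IsRegularLang {w | w.map g ∈ L} := by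
  obtain ⟨σ, f, M, hM⟩ := h
  refine ⟨σ, f, M.comap g, fun w => ?_⟩
  rw [DFA.accepts_comap]
  exact hM _

/-- The projection of a regular language, with leading padding symbols removed. -/
theorem IsRegularLang.proj' {α β : Type*} {L : Set (List β)} (h : IsRegularLang L) (g : β → α)
    (z : α) : IsRegularLang {w | ∃ m : ℕ, ∃ v ∈ L, v.map g = List.replicate m z ++ w} := by
  classical
  obtain ⟨σ, f, M, hM⟩ := h
  let D : DFA α (Set σ) :=
    { step := fun Q a => {q' | ∃ q ∈ Q, ∃ b, g b = a ∧ q' = M.step q b}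
      start := {q | ∃ m : ℕ, ∃ v, v.map g = List.replicate m z ∧ M.eval v = q}
      accept := {Q | ∃ q ∈ Q, q ∈ M.accept} }
  have key : ∀ w, D.eval w =
      {q | ∃ m : ℕ, ∃ v, v.map g = List.replicate m z ++ w ∧ M.eval v = q} := by
    intro w
    induction w using List.reverseRecOn with
    | nil => simp [D]
    | append_singleton w a ih =>
      rw [DFA.eval_append_singleton, ih]
      ext q'
      constructor
      · rintro ⟨q, ⟨m, v, hv, rfl⟩, b, rfl, rfl⟩
        exact ⟨m, v ++ [b], by simp [hv], by simp⟩
      · rintro ⟨m, v, hv, rfl⟩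
        rw [← List.append_assoc] at hv
        obtain ⟨v', b', rfl, h1, h2⟩ := List.map_eq_append_iff.1 hv
        obtain ⟨b, rfl, hb⟩ := List.map_eq_singleton_iff.1 h2
        exact ⟨M.eval v', ⟨m, v', h1, rfl⟩, b, hb, by simp⟩
  refine ⟨Set σ, inferInstance, D, fun w => ?_⟩
  rw [DFA.mem_accepts, key]
  constructor
  · rintro ⟨q, ⟨m, v, hv, rfl⟩, hq⟩
    exact ⟨m, v, (hM v).1 hq, hv⟩
  · rintro ⟨m, v, hv, h⟩
    exact ⟨_, ⟨m, v, h, rfl⟩, (hM v).2 hv⟩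

/-- Adding arbitrary leading padding symbols. -/
theorem IsRegularLang.pad' {α : Type*} {L : Set (List α)} (h : IsRegularLang L) (z : α)
    (hL : ∀ w, z :: w ∉ L) :
    IsRegularLang {w | ∃ m : ℕ, ∃ v ∈ L, w = List.replicate m z ++ v} := by
  classical
  obtain ⟨σ, f, M, hM⟩ := h
  let D : DFA α (Option σ) :=
    { step := fun q a => match q with
        | none => if a = z then none else some (M.step M.start a)
        | some q => some (M.step q a)
      start := none
      accept := {q | q.getD M.start ∈ M.accept} }
  have h1 : ∀ w q, D.evalFrom (some q) w = some (M.evalFrom q w) := by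
    intro w
    induction w with
    | nil => intro q; rfl
    | cons a w ih => intro q; simp only [DFA.evalFrom_cons]; exact ih _
  have h2 : ∀ w, (D.evalFrom none w).getD M.start ∈ M.accept ↔
      ∃ m : ℕ, ∃ v ∈ L, w = List.replicate m z ++ v := by
    intro w
    induction w with
    | nil =>
      have : M.start ∈ M.accept ↔ [] ∈ L := hM []
      simp [this]
    | cons a w ih =>
      rw [DFA.evalFrom_cons]
      by_cases ha : a = z
      · subst ha
        have : D.step none a = none := by simp [D]
        rw [this, ih]
        constructor
        · rintro ⟨m, v, hv, rfl⟩
          exact ⟨m + 1, v, hv, by simp [List.replicate_succ]⟩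
        · rintro ⟨m, v, hv, h⟩
          cases m with
          | zero => simp at h; exact absurd (h ▸ hv) (hL _)
          | succ m => simp [List.replicate_succ] at h; exact ⟨m, v, hv, h⟩
      · have : D.step none a = some (M.step M.start a) := by simp [D, ha]
        rw [this, h1]
        have h3 : M.evalFrom (M.step M.start a) w ∈ M.accept ↔ a :: w ∈ L := hM (a :: w)
        simp only [Option.getD_some, h3]
        constructor
        · intro h; exact ⟨0, _, h, by simp⟩
        · rintro ⟨m, v, hv, h⟩
          cases m with
          | zero => simp at h; exact h ▸ hv
          | succ m => simp [List.replicate_succ] at h; exact absurd h.1 ha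
  exact ⟨Option σ, inferInstance, D, h2⟩

theorem IsRegularLang.head' {α : Type*} (z : α) : IsRegularLang {w : List α | ∀ v, w ≠ z :: v} := by
  classical
  let D : DFA α (Option Bool) :=
    { step := fun q a => match q with
        | none => if a = z then some false else some true
        | some q => some q
      start := none
      accept := {q | q ≠ some false} }
  have h1 : ∀ w q, D.evalFrom (some q) w = some q := by
    intro w
    induction w with
    | nil => intro q; rfl
    | cons a w ih => intro q; simp only [DFA.evalFrom_cons]; exact ih _
  refine ⟨Option Bool, inferInstance, D, fun w => ?_⟩
  rw [DFA.mem_accepts]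
  cases w with
  | nil => simp [D]
  | cons a w =>
    have : D.eval (a :: w) = if a = z then some false else some true := by
      change D.evalFrom (D.step none a) w = _
      by_cases ha : a = z <;> simp [D, ha] <;> exact h1 _ _
    rw [this]
    by_cases ha : a = z <;> simp [D, ha]

end RegLang


section Tracks

/-- `T` is `r` with some padding in front. -/
def PadOf {A : Type} (T : List (Option A)) (r : List A) : Prop :=
  ∃ m : ℕ, T = List.replicate m none ++ r.map some

theorem padOf_cons_none {A : Type} (T : List (Option A)) (r : List A) :
    PadOf (none :: T) r ↔ PadOf T r := by
  constructor
  · rintro ⟨m, h⟩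
    cases m with
    | zero => cases r <;> simp at h
    | succ m => simp [List.replicate_succ] at h; exact ⟨m, h⟩
  · rintro ⟨m, rfl⟩
    exact ⟨m + 1, by simp [List.replicate_succ]⟩

theorem padOf_replicate {A : Type} (m : ℕ) (T : List (Option A)) (r : List A) :
    PadOf (List.replicate m none ++ T) r ↔ PadOf T r := by
  induction m with
  | zero => simp
  | succ m ih => rw [List.replicate_succ, List.cons_append, padOf_cons_none, ih]

theorem padOf_unique {A : Type} {T : List (Option A)} {r r' : List A} (h : PadOf T r)
    (h' : PadOf T r') : r = r' := by
  have key : ∀ r : List A, PadOf T r → T.filterMap id = r := by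
    rintro r ⟨m, rfl⟩
    simp [List.filterMap_append, List.filterMap_map]
  rw [← key r h, key r' h']

theorem padOf_padOne {A : Type} (M : ℕ) (r : List A) : PadOf (padOne M r) r := ⟨_, rfl⟩

theorem PadOf.length_le {A : Type} {T : List (Option A)} {r : List A} (h : PadOf T r) :
    r.length ≤ T.length := by
  obtain ⟨m, rfl⟩ := h
  simp

theorem PadOf.eq_padOne {A : Type} {T : List (Option A)} {r : List A} (h : PadOf T r) :
    T = padOne T.length r := by
  obtain ⟨m, rfl⟩ := h
  simp [padOne]

theorem length_padOne {A : Type} {M : ℕ} {r : List A} (h : r.length ≤ M) :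
    (padOne M r).length = M := by
  simp [padOne]; omega

/-- The `i`-th track of a word of columns. -/
def track {A ι : Type} (i : ι) (w : List (ι → Option A)) : List (Option A) :=
  w.map fun a => a i

theorem track_ext {A ι : Type} {w w' : List (ι → Option A)} (hl : w.length = w'.length)
    (h : ∀ i, track i w = track i w') : w = w' := by
  induction w generalizing w' with
  | nil => cases w' with
    | nil => rfl
    | cons b w' => simp at hl
  | cons a w ih =>
    cases w' with
    | nil => simp at hl
    | cons b w' =>
      have h1 : a = b := by
        funext i
        have := h i
        simp [track] at this
        exact this.1
      have h2 : w = w' := ih (by simpa using hl) fun i => by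
        have := h i
        simp [track] at this
        simpa [track] using this.2
      rw [h1, h2]

/-- Build a word of columns with given tracks. -/
def mkCols {A ι : Type} (N : ℕ) (r : ι → List A) : List (ι → Option A) :=
  List.ofFn fun j : Fin N => fun i => (padOne N (r i)).getD j.val none

theorem track_mkCols {A ι : Type} (N : ℕ) (r : ι → List A) (i : ι) (h : (r i).length ≤ N) :
    track i (mkCols N r) = padOne N (r i) := by
  apply List.ext_getElem
  · simp [track, mkCols, length_padOne h]
  · intro j h1 h2
    simp [track, mkCols, h2]

theorem padTuple_eq {A : Type} {d : ℕ} (ws : Fin d → List A) :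
    padTuple ws = mkCols (Finset.univ.sup fun i : Fin d => (ws i).length) ws := rfl

theorem length_mkCols {A ι : Type} (N : ℕ) (r : ι → List A) : (mkCols N r).length = N := by
  simp [mkCols]

theorem track_append {A ι : Type} (i : ι) (v w : List (ι → Option A)) :
    track i (v ++ w) = track i v ++ track i w := by simp [track]

theorem track_replicate {A ι : Type} (i : ι) (m : ℕ) :
    track i (List.replicate m (fun _ : ι => (none : Option A))) = List.replicate m none := by
  simp [track]

theorem length_track {A ι : Type} (i : ι) (w : List (ι → Option A)) :
    (track i w).length = w.length := by simp [track]

/-- All padded representations of members of `Y`. -/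
def LL {A ι : Type} (S : ANS A) (Y : Set (ι → ℕ)) : Set (List (ι → Option A)) :=
  {w | ∃ t ∈ Y, ∀ i, PadOf (track i w) (S.rep (t i))}

/-- Recognizability, in terms of all padded representations. -/
def Rec {A ι : Type} (S : ANS A) (Y : Set (ι → ℕ)) : Prop := IsRegularLang (LL S Y)

theorem LL_unique {A ι : Type} {S : ANS A} {w : List (ι → Option A)} {t t' : ι → ℕ}
    (h : ∀ i, PadOf (track i w) (S.rep (t i))) (h' : ∀ i, PadOf (track i w) (S.rep (t' i))) :
    t = t' :=
  funext fun i => S.inj (padOf_unique (h i) (h' i))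

theorem LL_iff_padTuple {A : Type} {S : ANS A} {d : ℕ} {Y : Set (Fin d → ℕ)}
    (w : List (Fin d → Option A)) :
    w ∈ LL S Y ↔ ∃ m : ℕ, ∃ t ∈ Y, w =
      List.replicate m (fun _ => none) ++ padTuple fun i => S.rep (t i) := by
  constructor
  · rintro ⟨t, ht, h⟩
    set M := Finset.univ.sup fun i : Fin d => (S.rep (t i)).length with hM
    have hle : M ≤ w.length := Finset.sup_le fun i _ => by
      have := (h i).length_le; rwa [length_track] at this
    refine ⟨w.length - M, t, ht, ?_⟩
    rw [padTuple_eq, ← hM]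
    apply track_ext
    · simp [length_mkCols]; omega
    · intro i
      have hi : (S.rep (t i)).length ≤ M :=
        Finset.le_sup (f := fun i : Fin d => (S.rep (t i)).length) (Finset.mem_univ i)
      rw [track_append, track_replicate, track_mkCols M (fun i => S.rep (t i)) i hi, (h i).eq_padOne, length_track]
      simp only [padOne, ← List.append_assoc, List.replicate_append_replicate]
      congr 2
      omega
  · rintro ⟨m, t, ht, rfl⟩
    refine ⟨t, ht, fun i => ?_⟩
    have hi := Finset.le_sup (f := fun i : Fin d => (S.rep (t i)).length) (Finset.mem_univ i)
    rw [track_append, track_replicate, padOf_replicate, padTuple_eq,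
      track_mkCols _ (fun i => S.rep (t i)) i hi]
    exact padOf_padOne _ _

theorem padTuple_head {A : Type} {d : ℕ} (ws : Fin d → List A) (v : List (Fin d → Option A)) :
    padTuple ws ≠ (fun _ => none) :: v := by
  intro h
  have hl : (Finset.univ.sup fun i : Fin d => (ws i).length) = v.length + 1 := by
    have := congrArg List.length h
    rwa [padTuple_eq, length_mkCols] at this
  have hpos : 0 < (Finset.univ.sup fun i : Fin d => (ws i).length) := by omega
  have : ∃ i : Fin d, (ws i).length = (Finset.univ.sup fun i : Fin d => (ws i).length) := by
    by_contra hcon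
    push Not at hcon
    have : (Finset.univ.sup fun i : Fin d => (ws i).length) <
        (Finset.univ.sup fun i : Fin d => (ws i).length) := by
      rw [Finset.sup_lt_iff hpos]
      intro i _
      exact lt_of_le_of_ne
        (Finset.le_sup (f := fun i : Fin d => (ws i).length) (Finset.mem_univ i)) (hcon i)
    exact lt_irrefl _ this
  obtain ⟨i, hi⟩ := this
  have h2 : track i (padTuple ws) = none :: track i v := by rw [h]; rfl
  rw [padTuple_eq, track_mkCols _ _ _ hi.le, padOne, hi, Nat.sub_self] at h2
  cases hw : ws i <;> simp [hw] at h2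

theorem recognizable_iff_rec {A : Type} {S : ANS A} {d : ℕ} {Y : Set (Fin d → ℕ)} :
    S.Recognizable Y ↔ Rec S Y := by
  constructor
  · intro h
    refine (IsRegularLang.pad' h (fun _ => none) ?_).congr' fun w => ?_
    · rintro w ⟨t, _, ht⟩
      exact padTuple_head _ _ ht.symm
    · rw [LL_iff_padTuple]
      constructor
      · rintro ⟨m, v, ⟨t, ht, rfl⟩, rfl⟩
        exact ⟨m, t, ht, rfl⟩
      · rintro ⟨m, t, ht, rfl⟩
        exact ⟨m, _, ⟨t, ht, rfl⟩, rfl⟩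
  · intro h
    refine (IsRegularLang.inter' h (IsRegularLang.head' (fun _ => none))).congr' fun w => ?_
    simp only [Set.mem_ofPred_eq, LL_iff_padTuple]
    constructor
    · rintro ⟨⟨m, t, ht, rfl⟩, h2⟩
      cases m with
      | zero => exact ⟨t, ht, by simp⟩
      | succ m => exact absurd rfl (h2 _)
    · rintro ⟨t, ht, rfl⟩
      exact ⟨⟨0, t, ht, by simp⟩, padTuple_head _⟩

theorem Rec.image {A ι κ : Type} [Finite κ] {S : ANS A} {Y : Set (κ → ℕ)} (h : Rec S Y)
    (f : ι → κ) : Rec S {t : ι → ℕ | ∃ u ∈ Y, t = fun i => u (f i)} := by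
  classical
  have := Fintype.ofFinite κ
  refine (IsRegularLang.proj' h (fun b : κ → Option A => fun i => b (f i))
    (fun _ => none)).congr' fun w => ?_
  have htr : ∀ (v : List (κ → Option A)) (i : ι),
      track i (v.map fun b : κ → Option A => fun i => b (f i)) = track (f i) v := by
    intro v i; simp [track]
  constructor
  · rintro ⟨m, v, ⟨u, hu, hv⟩, he⟩
    refine ⟨_, ⟨u, hu, rfl⟩, fun i => ?_⟩
    rw [← padOf_replicate m, ← track_replicate i, ← track_append, ← he, htr]
    exact hv _
  · rintro ⟨_, ⟨u, hu, rfl⟩, hw⟩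
    set M := Finset.univ.sup fun k : κ => (S.rep (u k)).length with hM
    have hk : ∀ k, (S.rep (u k)).length ≤ M + w.length := fun k =>
      le_trans (Finset.le_sup (f := fun k : κ => (S.rep (u k)).length) (Finset.mem_univ k))
        (Nat.le_add_right _ _)
    refine ⟨M, mkCols (M + w.length) fun k => S.rep (u k), ⟨u, hu, fun k => ?_⟩, ?_⟩
    · rw [track_mkCols _ (fun k => S.rep (u k)) k (hk k)]; exact padOf_padOne _ _
    · apply track_ext
      · simp [length_mkCols]
      · intro i
        rw [htr, track_mkCols _ (fun k => S.rep (u k)) (f i) (hk _), track_append, track_replicate, (hw i).eq_padOne,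
          length_track]
        have h3 := (hw i).length_le
        rw [length_track] at h3
        beta_reduce at h3 ⊢
        simp only [padOne, ← List.append_assoc, List.replicate_append_replicate]
        congr 2
        omega

theorem LL_univ {A ι : Type} (S : ANS A) (w : List (ι → Option A)) :
    w ∈ LL S (Set.univ : Set (ι → ℕ)) ↔
      ∀ i, w.map (fun a => fun _ : Unit => a i) ∈ LL S (Set.univ : Set (Unit → ℕ)) := by
  have htr : ∀ i u, track u (w.map (fun a => fun _ : Unit => a i)) = track i w := by
    intro i u; simp [track]
  constructor
  · rintro ⟨t, -, h⟩ i
    exact ⟨fun _ => t i, trivial, fun u => by rw [htr]; exact h i⟩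
  · intro h
    choose t _ ht using h
    exact ⟨fun i => t i (), trivial, fun i => by have := ht i (); rwa [htr] at this⟩

theorem rec_univ {A ι : Type} [Finite ι] {S : ANS A} (hadd : S.Addable) :
    Rec S (Set.univ : Set (ι → ℕ)) := by
  have := Fintype.ofFinite ι
  have h1 : Rec S (Set.univ : Set (Unit → ℕ)) := by
    have h := (recognizable_iff_rec.1 hadd).image (fun _ : Unit => (0 : Fin 3))
    convert h using 1
    symm
    rw [Set.eq_univ_iff_forall]
    intro t
    exact ⟨![t (), 0, t ()], by simp, by funext i; simp⟩
  refine (IsRegularLang.finInter (Finset.univ : Finset ι)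
    (fun i => IsRegularLang.comap' h1 (fun a : ι → Option A => fun _ : Unit => a i))).congr'
    fun w => ?_
  rw [LL_univ]
  simp

theorem Rec.compl {A ι : Type} [Finite ι] {S : ANS A} (hadd : S.Addable) {Y : Set (ι → ℕ)}
    (h : Rec S Y) : Rec S {t | t ∉ Y} := by
  refine (IsRegularLang.inter' (rec_univ (ι := ι) hadd) (IsRegularLang.compl' h)).congr'
    fun w => ?_
  constructor
  · rintro ⟨⟨t, -, ht⟩, h2⟩
    exact ⟨t, fun hY => h2 ⟨t, hY, ht⟩, ht⟩
  · rintro ⟨t, hY, ht⟩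
    refine ⟨⟨t, trivial, ht⟩, ?_⟩
    rintro ⟨t', hY', ht'⟩
    exact hY (LL_unique ht ht' ▸ hY')

theorem Rec.inter {A ι : Type} {S : ANS A} {Y Z : Set (ι → ℕ)}
    (h : Rec S Y) (h' : Rec S Z) : Rec S {t | t ∈ Y ∧ t ∈ Z} := by
  refine (IsRegularLang.inter' h h').congr' fun w => ?_
  constructor
  · rintro ⟨⟨t, hY, ht⟩, ⟨t', hZ, ht'⟩⟩
    exact ⟨t, ⟨hY, LL_unique ht ht' ▸ hZ⟩, ht⟩
  · rintro ⟨t, ⟨hY, hZ⟩, ht⟩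
    exact ⟨⟨t, hY, ht⟩, ⟨t, hZ, ht⟩⟩

theorem Rec.comap {A ι κ : Type} [Finite κ] {S : ANS A} (hadd : S.Addable) {Y : Set (ι → ℕ)}
    (h : Rec S Y) (f : ι → κ) : Rec S {t : κ → ℕ | (fun i => t (f i)) ∈ Y} := by
  refine (IsRegularLang.inter' (rec_univ (ι := κ) hadd)
    (IsRegularLang.comap' h (fun b : κ → Option A => fun i => b (f i)))).congr' fun w => ?_
  have htr : ∀ (v : List (κ → Option A)) (i : ι),
      track i (v.map fun b : κ → Option A => fun i => b (f i)) = track (f i) v := by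
    intro v i; simp [track]
  constructor
  · rintro ⟨⟨t, -, ht⟩, ⟨t', hY, ht'⟩⟩
    refine ⟨t, ?_, ht⟩
    have : (fun i => t (f i)) = t' :=
      LL_unique (w := w.map fun b : κ → Option A => fun i => b (f i))
        (fun i => by rw [htr]; exact ht _) ht'
    change (fun i => t (f i)) ∈ Y
    rw [this]; exact hY
  · rintro ⟨t, hY, ht⟩
    exact ⟨⟨t, trivial, ht⟩, ⟨_, hY, fun i => by rw [htr]; exact ht _⟩⟩

theorem rec_letter {A C : Type} {S : ANS A} (hadd : S.Addable) {x : ℕ → C} (hx : SAutomatic S x)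
    (c : C) : Rec S {t : Unit → ℕ | x (t ()) = c} := by
  obtain ⟨Q, f, M, τ, hM⟩ := hx
  let D : DFA (Unit → Option A) Q :=
    { step := fun q a => match a () with
        | none => q
        | some a => M.step q a
      start := M.start
      accept := {q | τ q = c} }
  have h1 : ∀ w q, D.evalFrom q w = M.evalFrom q ((track () w).filterMap id) := by
    intro w
    induction w with
    | nil => intro q; rfl
    | cons a w ih =>
      intro q
      rw [DFA.evalFrom_cons, ih]
      cases ha : a () <;> simp [track, ha, D]
  have hD : IsRegularLang {w | w ∈ D.accepts} := ⟨Q, f, D, fun w => Iff.rfl⟩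
  refine (IsRegularLang.inter' (rec_univ (ι := Unit) hadd) hD).congr' fun w => ?_
  have key : ∀ t : Unit → ℕ, (∀ i, PadOf (track i w) (S.rep (t i))) →
      (w ∈ D.accepts ↔ x (t ()) = c) := by
    intro t ht
    obtain ⟨m, hm⟩ := ht ()
    change τ (D.evalFrom M.start w) = c ↔ _
    rw [h1, hm, ← hM]
    simp [List.filterMap_append, List.filterMap_map, DFA.eval]
  constructor
  · rintro ⟨⟨t, -, ht⟩, h2⟩
    exact ⟨t, (key t ht).1 h2, ht⟩
  · rintro ⟨t, hY, ht⟩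
    exact ⟨⟨t, trivial, ht⟩, (key t ht).2 hY⟩

end Tracks


section Definable

variable {A ι κ C : Type}

/-- A predicate on tuples of numbers is definable if it is recognizable. -/
def DefP (S : ANS A) (P : (ι → ℕ) → Prop) : Prop := Rec S {t | P t}

theorem DefP.congr {S : ANS A} {P Q : (ι → ℕ) → Prop} (h : DefP S P) (e : ∀ t, P t ↔ Q t) :
    DefP S Q := by
  have : P = Q := funext fun t => propext (e t)
  exact this ▸ h

theorem DefP.not [Finite ι] {S : ANS A} (hadd : S.Addable) {P : (ι → ℕ) → Prop} (h : DefP S P) :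
    DefP S (fun t => ¬ P t) := Rec.compl hadd h

theorem DefP.and {S : ANS A} {P Q : (ι → ℕ) → Prop} (h : DefP S P) (h' : DefP S Q) :
    DefP S (fun t => P t ∧ Q t) := Rec.inter h h'

theorem DefP.or [Finite ι] {S : ANS A} (hadd : S.Addable) {P Q : (ι → ℕ) → Prop} (h : DefP S P)
    (h' : DefP S Q) : DefP S (fun t => P t ∨ Q t) :=
  (((h.not hadd).and (h'.not hadd)).not hadd).congr fun t => by tauto

theorem DefP.imp [Finite ι] {S : ANS A} (hadd : S.Addable) {P Q : (ι → ℕ) → Prop} (h : DefP S P)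
    (h' : DefP S Q) : DefP S (fun t => P t → Q t) :=
  ((h.and (h'.not hadd)).not hadd).congr fun t => by tauto

theorem DefP.const [Finite ι] {S : ANS A} (hadd : S.Addable) (p : Prop) :
    DefP S (fun _ : ι → ℕ => p) := by
  have h : DefP S (fun _ : ι → ℕ => True) := rec_univ hadd
  by_cases hp : p
  · exact h.congr fun t => by simp [hp]
  · exact (h.not hadd).congr fun t => by simp [hp]

theorem DefP.iff [Finite ι] {S : ANS A} (hadd : S.Addable) {P Q : (ι → ℕ) → Prop} (h : DefP S P)
    (h' : DefP S Q) : DefP S (fun t => P t ↔ Q t) :=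
  ((h.imp hadd h').and (h'.imp hadd h)).congr fun t => by tauto

theorem DefP.finAll [Finite ι] {S : ANS A} (hadd : S.Addable) {β : Type} [Finite β]
    {P : β → (ι → ℕ) → Prop} (h : ∀ b, DefP S (P b)) : DefP S (fun t => ∀ b, P b t) := by
  classical
  have := Fintype.ofFinite β
  have key : ∀ s : Finset β, DefP S (fun t => ∀ b ∈ s, P b t) := by
    intro s
    induction s using Finset.induction_on with
    | empty => exact (DefP.const hadd True).congr (by simp)
    | insert a s _ ih => exact ((h a).and ih).congr (by simp)
  exact (key Finset.univ).congr (by simp)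

theorem DefP.finEx [Finite ι] {S : ANS A} (hadd : S.Addable) {β : Type} [Finite β]
    {P : β → (ι → ℕ) → Prop} (h : ∀ b, DefP S (P b)) : DefP S (fun t => ∃ b, P b t) :=
  ((DefP.finAll hadd fun b => (h b).not hadd).not hadd).congr fun t => by simp

/-- Any Boolean combination of finitely many definable predicates is definable. -/
theorem DefP.bool [Finite ι] {S : ANS A} (hadd : S.Addable) {β : Type} [Finite β]
    {P : β → (ι → ℕ) → Prop} (h : ∀ b, DefP S (P b)) (Q : (β → Prop) → Prop) :
    DefP S (fun t => Q fun b => P b t) := by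
  have h1 : DefP S (fun t => ∃ v : β → Prop, Q v ∧ ∀ b, (P b t ↔ v b)) :=
    DefP.finEx hadd fun v => (DefP.const hadd _).and
      (DefP.finAll hadd fun b => (h b).iff hadd (DefP.const hadd _))
  refine h1.congr fun t => ?_
  constructor
  · rintro ⟨v, hv, h⟩
    have : v = fun b => P b t := funext fun b => (propext (h b)).symm
    exact this ▸ hv
  · intro hQ
    exact ⟨_, hQ, fun b => Iff.rfl⟩

theorem DefP.comap [Finite κ] {S : ANS A} (hadd : S.Addable) {P : (ι → ℕ) → Prop}
    (h : DefP S P) (f : ι → κ) : DefP S (fun t : κ → ℕ => P fun i => t (f i)) :=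
  Rec.comap hadd h f

theorem DefP.ex [Finite ι] [Finite κ] {S : ANS A} {P : (ι → ℕ) → (κ → ℕ) → Prop}
    (h : DefP S (fun t : ι ⊕ κ → ℕ => P (fun i => t (Sum.inl i)) (fun k => t (Sum.inr k)))) :
    DefP S (fun t => ∃ u, P t u) := by
  refine DefP.congr (Rec.image h (Sum.inl : ι → ι ⊕ κ)) fun t => ?_
  constructor
  · rintro ⟨u, hu, rfl⟩
    exact ⟨_, hu⟩
  · rintro ⟨u, hu⟩
    exact ⟨Sum.elim t u, hu, rfl⟩

theorem DefP.ex1 [Finite ι] {S : ANS A} {P : (ι → ℕ) → ℕ → Prop}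
    (h : DefP S (fun t : ι ⊕ Unit → ℕ => P (fun i => t (Sum.inl i)) (t (Sum.inr ())))) :
    DefP S (fun t => ∃ n, P t n) :=
  (DefP.ex (κ := Unit) (P := fun t u => P t (u ())) h).congr fun _ =>
    ⟨fun ⟨u, hu⟩ => ⟨u (), hu⟩, fun ⟨n, hn⟩ => ⟨fun _ => n, hn⟩⟩

theorem DefP.all1 [Finite ι] {S : ANS A} (hadd : S.Addable) {P : (ι → ℕ) → ℕ → Prop}
    (h : DefP S (fun t : ι ⊕ Unit → ℕ => P (fun i => t (Sum.inl i)) (t (Sum.inr ())))) :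
    DefP S (fun t => ∀ n, P t n) :=
  ((DefP.ex1 (P := fun t n => ¬ P t n) (h.not hadd)).not hadd).congr fun t => by simp

theorem DefP.add [Finite ι] {S : ANS A} (hadd : S.Addable) (a b c : ι) :
    DefP S (fun t : ι → ℕ => t a + t b = t c) := by
  have h : DefP S (fun t : Fin 3 → ℕ => t 0 + t 1 = t 2) := recognizable_iff_rec.1 hadd
  exact (h.comap hadd ![a, b, c]).congr fun t => by simp

theorem DefP.le [Finite ι] {S : ANS A} (hadd : S.Addable) (a b : ι) :
    DefP S (fun t : ι → ℕ => t a ≤ t b) := by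
  refine (DefP.ex1 (P := fun t n => t a + n = t b)
    (DefP.add hadd (Sum.inl a) (Sum.inr ()) (Sum.inl b))).congr fun t => ?_
  exact ⟨fun ⟨n, h⟩ => by omega, fun h => ⟨t b - t a, by omega⟩⟩

theorem DefP.eq [Finite ι] {S : ANS A} (hadd : S.Addable) (a b : ι) :
    DefP S (fun t : ι → ℕ => t a = t b) :=
  ((DefP.le hadd a b).and (DefP.le hadd b a)).congr fun _ => le_antisymm_iff.symm

theorem DefP.lt [Finite ι] {S : ANS A} (hadd : S.Addable) (a b : ι) :
    DefP S (fun t : ι → ℕ => t a < t b) :=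
  ((DefP.le hadd b a).not hadd).congr fun _ => not_le

theorem DefP.letter [Finite ι] {S : ANS A} (hadd : S.Addable) {x : ℕ → C} (hx : SAutomatic S x)
    (a b : ι) (c : C) : DefP S (fun t : ι → ℕ => x (t a + t b) = c) := by
  have h1 : DefP S (fun t : Unit → ℕ => x (t ()) = c) := rec_letter hadd hx c
  refine (DefP.ex1 (P := fun t n => t a + t b = n ∧ x n = c)
    ((DefP.add hadd (Sum.inl a) (Sum.inl b) (Sum.inr ())).and
      (h1.comap hadd fun _ => Sum.inr ()))).congr fun t => by simp

theorem DefP.agree [Finite ι] [Finite C] {S : ANS A} (hadd : S.Addable) {x : ℕ → C}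
    (hx : SAutomatic S x) (a b m : ι) :
    DefP S (fun t : ι → ℕ => ∀ m' < t m, x (t a + m') = x (t b + m')) := by
  refine DefP.all1 hadd (P := fun t m' => m' < t m → x (t a + m') = x (t b + m')) ?_
  refine (DefP.lt hadd (Sum.inr ()) (Sum.inl m)).imp hadd ?_
  refine (DefP.finAll hadd fun c : C =>
    (DefP.letter hadd hx (Sum.inl a) (Sum.inr ()) c).iff hadd
    (DefP.letter hadd hx (Sum.inl b) (Sum.inr ()) c)).congr fun t => ?_
  constructor
  · intro h; exact ((h _).1 rfl).symm
  · intro h c; rw [h]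

/-- The finite-depth condition characterizing the winning shift. -/
def FinWin (x : ℕ → C) (α : ℕ → ℕ) (M N : ℕ) : Prop :=
  ∃ p : Fin M → ℕ, ∀ l : Fin M, ∀ m < N,
    Set.ncard {c : C | ∃ l' : Fin M, (∀ m' < m, x (p l + m') = x (p l' + m')) ∧
      x (p l' + m) = c} = α m + 1

theorem recognizable_finWin [Finite C] {S : ANS A} (hadd : S.Addable) {x : ℕ → C}
    (hx : SAutomatic S x) (k M : ℕ) :
    S.Recognizable {t : Fin k → ℕ | Monotone t ∧
      ∀ N, FinWin x (fun j => Set.ncard {i : Fin k | t i = j}) M N} := by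
  rw [recognizable_iff_rec]
  have hmono : DefP S (fun t : Fin k → ℕ => Monotone t) :=
    (DefP.finAll hadd fun i : Fin k => DefP.finAll hadd fun j : Fin k =>
      (DefP.const hadd (i ≤ j)).imp hadd (DefP.le hadd i j)).congr fun t =>
      ⟨fun h i j hij => h i j hij, fun h i j hij => h hij⟩
  refine DefP.and hmono ?_
  refine DefP.all1 hadd
    (P := fun t N => FinWin x (fun j => Set.ncard {i : Fin k | t i = j}) M N) ?_
  unfold FinWin
  refine DefP.ex (P := fun (t : Fin k ⊕ Unit → ℕ) (p : Fin M → ℕ) => ∀ l : Fin M,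
    ∀ m < t (Sum.inr ()),
    Set.ncard {c : C | ∃ l' : Fin M, (∀ m' < m, x (p l + m') = x (p l' + m')) ∧
      x (p l' + m) = c} = Set.ncard {i : Fin k | t (Sum.inl i) = m} + 1) ?_
  refine DefP.finAll hadd fun l => ?_
  refine DefP.all1 hadd (P := fun (t : (Fin k ⊕ Unit) ⊕ Fin M → ℕ) (m : ℕ) =>
    m < t (Sum.inl (Sum.inr ())) →
    Set.ncard {c : C | ∃ l' : Fin M,
      (∀ m' < m, x (t (Sum.inr l) + m') = x (t (Sum.inr l') + m')) ∧
      x (t (Sum.inr l') + m) = c} =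
      Set.ncard {i : Fin k | t (Sum.inl (Sum.inl i)) = m} + 1) ?_
  refine (DefP.lt hadd _ _).imp hadd ?_
  let P : (Fin M ⊕ (Fin M × C) ⊕ Fin k) → ((((Fin k ⊕ Unit) ⊕ Fin M) ⊕ Unit) → ℕ) → Prop :=
    fun b t => match b with
    | Sum.inl l' => ∀ m' < t (Sum.inr ()),
        x (t (Sum.inl (Sum.inr l)) + m') = x (t (Sum.inl (Sum.inr l')) + m')
    | Sum.inr (Sum.inl (l', c)) => x (t (Sum.inl (Sum.inr l')) + t (Sum.inr ())) = c
    | Sum.inr (Sum.inr i) => t (Sum.inl (Sum.inl (Sum.inl i))) = t (Sum.inr ())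
  have hP : ∀ b, DefP S (P b) := by
    rintro (l' | ⟨l', c⟩ | i)
    · exact DefP.agree hadd hx _ _ _
    · exact DefP.letter hadd hx _ _ _
    · exact DefP.eq hadd _ _
  exact DefP.bool hadd hP fun v =>
    Set.ncard {c : C | ∃ l' : Fin M, v (Sum.inl l') ∧ v (Sum.inr (Sum.inl (l', c)))} =
      Set.ncard {i : Fin k | v (Sum.inr (Sum.inr i))} + 1

end Definable


section Winning

variable {C : Type}

/-- The prefix of length `n` of an infinite word. -/
def pre (y : ℕ → C) (n : ℕ) : List C := List.ofFn fun i : Fin n => y i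

theorem length_pre (y : ℕ → C) (n : ℕ) : (pre y n).length = n := by simp [pre]

theorem pre_succ (y : ℕ → C) (n : ℕ) : pre y (n + 1) = pre y n ++ [y n] := by
  simp only [pre, List.ofFn_succ_last]
  simp

theorem snoc_inj (a b : List C) (c d : C) : a ++ [c] = b ++ [d] ↔ a = b ∧ c = d := by
  constructor
  · intro h
    obtain ⟨h1, h2⟩ := List.append_inj' h rfl
    exact ⟨h1, by simpa using h2⟩
  · rintro ⟨rfl, rfl⟩; rfl

theorem pre_eq_iff (y z : ℕ → C) (n : ℕ) : pre y n = pre z n ↔ ∀ i < n, y i = z i := by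
  induction n with
  | zero => simp [pre]
  | succ n ih =>
    rw [pre_succ, pre_succ, snoc_inj, ih]
    constructor
    · rintro ⟨h1, h2⟩ i hi
      rcases Nat.lt_succ_iff_lt_or_eq.1 hi with h | rfl
      · exact h1 i h
      · exact h2
    · intro h
      exact ⟨fun i hi => h i (by omega), h n (by omega)⟩

/-- In a strategy tree, every node extends to a branch. -/
theorem tree_branch {X : Set (ℕ → C)} {α : ℕ → ℕ} {T : Set (List C)} (hT : IsStrategyTree X α T)
    (w : List C) (hw : w ∈ T) : ∃ y ∈ X, pre y w.length = w ∧ ∀ n, pre y n ∈ T := by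
  classical
  obtain ⟨h0, hpre, hext, hbr⟩ := hT
  have hex : ∀ v : {v // v ∈ T}, ∃ c, v.1 ++ [c] ∈ T := by
    intro v
    have h := hext v.1 v.2
    have : {c | v.1 ++ [c] ∈ T}.Nonempty := by
      by_contra hne
      rw [Set.not_nonempty_iff_eq_empty] at hne
      rw [hne] at h
      simp at h
    exact this
  choose nx hnx using hex
  let seq : ℕ → {v // v ∈ T} := fun n =>
    Nat.rec ⟨w, hw⟩ (fun _ v => ⟨v.1 ++ [nx v], hnx v⟩) n
  have hseq : ∀ n, (seq (n + 1)).1 = (seq n).1 ++ [nx (seq n)] := fun n => rfl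
  have hlen : ∀ n, (seq n).1.length = w.length + n := by
    intro n
    induction n with
    | zero => rfl
    | succ n ih => rw [hseq]; simp [ih]; omega
  let y : ℕ → C := fun i => if h : i < w.length then w[i] else nx (seq (i - w.length))
  have hy : ∀ n, pre y (w.length + n) = (seq n).1 := by
    intro n
    induction n with
    | zero =>
      change pre y w.length = w
      apply List.ext_getElem
      · simp [pre]
      · intro i h1 h2
        simp [pre, y, h2]
    | succ n ih =>
      rw [← Nat.add_assoc, pre_succ, ih, hseq]
      simp [y]
  have hall : ∀ n, pre y n ∈ T := by
    intro n
    rcases le_total w.length n with h | h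
    · obtain ⟨k, rfl⟩ := Nat.exists_eq_add_of_le h
      rw [hy]; exact (seq k).2
    · have h1 : pre y w.length = w := hy 0
      have h2 : pre y w.length = pre y n ++ (pre y w.length).drop n := by
        conv_lhs => rw [← List.take_append_drop n (pre y w.length)]
        congr 1
        apply List.ext_getElem
        · simp [pre, h]
        · intro i h3 h4
          simp [pre]
      rw [h1] at h2
      exact hpre _ (w.drop n) (h2 ▸ hw)
  exact ⟨y, hbr y hall, hy 0, hall⟩

/-- The level sets of a strategy tree. -/
def level (T : Set (List C)) (n : ℕ) : Set (List C) := {w | w ∈ T ∧ w.length = n}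

theorem level_finite [Finite C] (T : Set (List C)) (n : ℕ) : (level T n).Finite :=
  (List.finite_length_eq C n).subset fun _ h => h.2

theorem ncard_level_succ [Finite C] {X : Set (ℕ → C)} {α : ℕ → ℕ} {T : Set (List C)}
    (hT : IsStrategyTree X α T) (n : ℕ) :
    (level T (n + 1)).ncard = (level T n).ncard * (α n + 1) := by
  classical
  have e : level T (n + 1) = ⋃ w ∈ level T n, (fun c => w ++ [c]) '' {c | w ++ [c] ∈ T} := by
    ext v
    simp only [Set.mem_iUnion, Set.mem_image, exists_prop]
    constructor
    · rintro ⟨hv, hl⟩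
      have hne : v ≠ [] := by rintro rfl; simp at hl
      have hv' := List.dropLast_append_getLast hne
      refine ⟨v.dropLast, ⟨hT.2.1 _ [v.getLast hne] (hv'.symm ▸ hv), by simp [hl]⟩,
        v.getLast hne, ?_, hv'⟩
      change _ ∈ T
      rw [hv']; exact hv
    · rintro ⟨w, ⟨hw, hl⟩, c, hc, rfl⟩
      exact ⟨hc, by simp [hl]⟩
  have hfin := level_finite T n
  rw [e]
  have h1 : ∀ w ∈ level T n, ((fun c => w ++ [c]) '' {c | w ++ [c] ∈ T}).ncard = α n + 1 := by
    rintro w ⟨hw, hl⟩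
    rw [Set.ncard_image_of_injective _ (fun a b h => by simpa using h), hT.2.2.1 w hw, hl]
  have key : ∀ s : Finset (List C), (∀ w ∈ s, w ∈ level T n) →
      (⋃ w ∈ s, (fun c => w ++ [c]) '' {c | w ++ [c] ∈ T}).ncard = s.card * (α n + 1) := by
    intro s
    induction s using Finset.induction_on with
    | empty => simp
    | insert a s ha ih =>
      intro hs
      rw [Finset.set_biUnion_insert, Set.ncard_union_eq ?_ (Set.toFinite _) ?_, h1 a (hs a (by simp)),
        ih (fun w hw => hs w (by simp [hw])), Finset.card_insert_of_notMem ha]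
      · ring
      · rw [Set.disjoint_left]
        rintro _ ⟨c, _, rfl⟩ h
        simp only [Set.mem_iUnion, Set.mem_image, exists_prop] at h
        obtain ⟨w, hw, c', _, h⟩ := h
        have := (List.append_inj' h rfl).1
        exact ha (this ▸ hw)
      · exact Set.Finite.biUnion s.finite_toSet fun w _ => Set.toFinite _
  have := key hfin.toFinset (fun w hw => by simpa using hw)
  rw [Set.ncard_eq_toFinset_card _ hfin, ← this]
  simp

theorem level_zero {X : Set (ℕ → C)} {α : ℕ → ℕ} {T : Set (List C)}
    (hT : IsStrategyTree X α T) : level T 0 = {[]} := by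
  ext w
  constructor
  · rintro ⟨_, h⟩; simpa using h
  · rintro rfl; exact ⟨hT.1, rfl⟩

theorem ncard_level [Finite C] {X : Set (ℕ → C)} {α : ℕ → ℕ} {T : Set (List C)}
    (hT : IsStrategyTree X α T) (n : ℕ) :
    (level T n).ncard = ∏ i ∈ Finset.range n, (α i + 1) := by
  induction n with
  | zero => simp [level_zero hT]
  | succ n ih => rw [ncard_level_succ hT, ih, Finset.prod_range_succ]

theorem finWin_of_tree [Finite C] {x : ℕ → C} {α : ℕ → ℕ} {T : Set (List C)}
    (hT : IsStrategyTree (orbitClosure x) α T) {M N : ℕ}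
    (hM : (level T N).ncard ≤ M) (hM0 : 0 < M) : FinWin x α M N := by
  classical
  have hfin := level_finite T N
  have hne : (level T N).Nonempty := by
    rw [← Set.ncard_pos hfin, ncard_level hT]
    exact Finset.prod_pos fun i _ => Nat.succ_pos _
  have hsurj : ∃ g : Fin M → List C, Set.range g = level T N := by
    obtain ⟨w0, hw0⟩ := hne
    have : Fintype (level T N) := hfin.fintype
    have e := Fintype.equivFin (level T N)
    have hc : Fintype.card (level T N) ≤ M := by
      rw [← Nat.card_eq_fintype_card]; exact hM
    refine ⟨fun i => if h : i.1 < Fintype.card (level T N) then (e.symm ⟨i.1, h⟩).1 else w0, ?_⟩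
    ext w
    constructor
    · rintro ⟨i, rfl⟩
      dsimp only
      split_ifs with h
      · exact (e.symm _).2
      · exact hw0
    · intro hw
      refine ⟨⟨(e ⟨w, hw⟩).1, lt_of_lt_of_le (e ⟨w, hw⟩).2 hc⟩, ?_⟩
      have h := (e ⟨w, hw⟩).2
      dsimp only
      rw [dif_pos h]
      simp
  obtain ⟨g, hg⟩ := hsurj
  have hgm : ∀ l, g l ∈ level T N := fun l => hg ▸ Set.mem_range_self l
  have hbr : ∀ l, ∃ p : ℕ, g l = pre (fun i => x (p + i)) N := by
    intro l
    obtain ⟨hl1, hl2⟩ := hgm l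
    obtain ⟨y, hy, hy2, _⟩ := tree_branch hT (g l) hl1
    obtain ⟨p, hp⟩ := hy N
    refine ⟨p, ?_⟩
    rw [← hy2, hl2, pre_eq_iff]
    exact hp
  choose p hp using hbr
  have hpreT : ∀ l, ∀ m ≤ N, pre (fun i => x (p l + i)) m ∈ T := by
    intro l m hm
    obtain ⟨hl1, hl2⟩ := hgm l
    have h2 : pre (fun i => x (p l + i)) N = pre (fun i => x (p l + i)) m ++
        (pre (fun i => x (p l + i)) N).drop m := by
      conv_lhs => rw [← List.take_append_drop m (pre _ N)]
      congr 1
      apply List.ext_getElem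
      · simp [pre, hm]
      · intro i h3 h4
        simp [pre]
    refine hT.2.1 _ ((pre (fun i => x (p l + i)) N).drop m) ?_
    rw [← h2, ← hp]
    exact hl1
  refine ⟨p, fun l m hm => ?_⟩
  have h1 := hT.2.2.1 _ (hpreT l m hm.le)
  rw [length_pre] at h1
  rw [← h1]
  congr 1
  ext c
  constructor
  · rintro ⟨l', h2, rfl⟩
    change pre (fun i => x (p l + i)) m ++ [x (p l' + m)] ∈ T
    rw [(pre_eq_iff _ (fun i => x (p l' + i)) m).2 h2, ← pre_succ (fun i => x (p l' + i)) m]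
    exact hpreT l' (m + 1) hm
  · intro hc
    obtain ⟨y, hy, hy2, hy3⟩ := tree_branch hT _ hc
    have : pre y N ∈ level T N := ⟨hy3 N, length_pre _ _⟩
    rw [← hg] at this
    obtain ⟨l', hl'⟩ := this
    rw [hp l', pre_eq_iff] at hl'
    simp only [List.length_append, length_pre, List.length_singleton] at hy2
    rw [pre_succ, snoc_inj, pre_eq_iff] at hy2
    refine ⟨l', fun m' hm' => ?_, ?_⟩
    · rw [hl' m' (by omega)]; exact (hy2.1 m' hm').symm
    · rw [hl' m hm]; exact hy2.2

theorem tree_of_finWin [Finite C] {x : ℕ → C} {α : ℕ → ℕ} {M : ℕ} (hM0 : 0 < M)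
    (h : ∀ N, FinWin x α M N) : α ∈ winningShift (orbitClosure x) := by
  classical
  choose p hp using h
  let TN : ℕ → Set (List C) := fun N => {w | w.length ≤ N ∧ ∃ l, w = pre (fun i => x (p N l + i)) w.length}
  let U : Ultrafilter ℕ := Filter.hyperfilter ℕ
  have hU : ∀ n : ℕ, ∀ᶠ N in (U : Filter ℕ), n ≤ N := by
    intro n
    have := Nat.hyperfilter_le_atTop (Filter.eventually_ge_atTop n)
    exact this
  refine ⟨{w | ∀ᶠ N in (U : Filter ℕ), w ∈ TN N}, ?_, ?_, ?_, ?_⟩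
  · exact Filter.Eventually.of_forall fun N => ⟨by simp, ⟨0, hM0⟩, by simp [pre]⟩
  · intro u v huv
    refine Filter.Eventually.mono huv fun N hN => ?_
    obtain ⟨h1, l, h2⟩ := hN
    refine ⟨by simp at h1; omega, l, ?_⟩
    have h3 := congrArg (List.take u.length) h2
    rw [List.take_left'] at h3
    · rw [h3]
      apply List.ext_getElem
      · simp [pre]
      · intro i h3 h4
        simp [pre]
        rfl
    · rfl
  · intro w hw
    have h1 : ∀ c, ∀ᶠ N in (U : Filter ℕ),
        (w ++ [c] ∈ TN N ↔ ∀ᶠ N in (U : Filter ℕ), w ++ [c] ∈ TN N) := by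
      intro c
      by_cases hc : ∀ᶠ N in (U : Filter ℕ), w ++ [c] ∈ TN N
      · exact hc.mono fun N hN => ⟨fun _ => hc, fun _ => hN⟩
      · have := Ultrafilter.eventually_not.2 hc
        exact this.mono fun N hN => ⟨fun h => absurd h hN, fun h => absurd h hc⟩
    have h2 := Filter.eventually_all.2 h1
    obtain ⟨N, hN1, hN2, hN3⟩ := (h2.and (hw.and (hU (w.length + 1)))).exists
    obtain ⟨h3, l, h4⟩ := hN2
    rw [← hp N l w.length (by omega)]
    congr 1
    ext c
    change (∀ᶠ N in (U : Filter ℕ), w ++ [c] ∈ TN N) ↔ _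
    rw [← hN1 c]
    constructor
    · rintro ⟨h5, l', h6⟩
      simp only [List.length_append, List.length_singleton] at h6
      rw [pre_succ, snoc_inj] at h6
      refine ⟨l', (pre_eq_iff (fun i => x (p N l + i)) (fun i => x (p N l' + i)) _).1
        (h4.symm.trans h6.1), ?_⟩
      exact h6.2.symm
    · rintro ⟨l', h5, rfl⟩
      refine ⟨by simp; omega, l', ?_⟩
      simp only [List.length_append, List.length_singleton]
      rw [pre_succ, ← (pre_eq_iff (fun i => x (p N l + i)) (fun i => x (p N l' + i)) _).2 h5, ← h4]
  · intro y hy n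
    obtain ⟨N, h1, l, h2⟩ := (hy n).exists
    refine ⟨p N l, ?_⟩
    change pre y n = pre _ (pre y n).length at h2
    rw [length_pre] at h2
    exact (pre_eq_iff _ _ _).1 h2

end Winning


section Weak

variable {A C : Type} [Fintype A]

theorem sum_ncard_fiber_le {k : ℕ} (t : Fin k → ℕ) (F : Finset ℕ) :
    ∑ j ∈ F, Set.ncard {i : Fin k | t i = j} ≤ k := by
  classical
  have h : ∀ j, Set.ncard {i : Fin k | t i = j} = (Finset.univ.filter fun i => t i = j).card := by
    intro j
    rw [Set.ncard_eq_toFinset_card']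
    congr 1
    ext i; simp
  simp only [h]
  rw [← Finset.card_biUnion]
  · exact (Finset.card_le_univ _).trans (by simp)
  · intro a _ b _ hab
    rw [Function.onFun, Finset.disjoint_left]
    intro i hi hj
    simp at hi hj
    exact hab (hi.symm.trans hj)

theorem weak_codable [Finite C] (S : ANS A) (hadd : S.Addable) (x : ℕ → C) (hx : SAutomatic S x) :
    WeaklySCodable S (winningShift (orbitClosure x)) := by
  intro k
  have h := recognizable_finWin hadd hx k (2 ^ k)
  convert h using 1
  ext t
  refine and_congr_right fun _ => ⟨?_, fun h => tree_of_finWin (by positivity) h⟩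
  rintro ⟨T, hT⟩ N
  refine finWin_of_tree hT ?_ (by positivity)
  rw [ncard_level hT]
  calc _ ≤ ∏ i ∈ Finset.range N, 2 ^ (Set.ncard {i' : Fin k | t i' = i}) :=
        Finset.prod_le_prod' fun i _ => Nat.lt_two_pow_self
    _ = 2 ^ (∑ i ∈ Finset.range N, Set.ncard {i' : Fin k | t i' = i}) := by
        rw [Finset.prod_pow_eq_pow_sum]
    _ ≤ 2 ^ k := Nat.pow_le_pow_right (by norm_num) (sum_ncard_fiber_le t _)

end Weak

section Dim

variable {C : Type}

/-- Right special factors of `x` of length `n`. -/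
def RSx (x : ℕ → C) (n : ℕ) : Set (List C) :=
  {w | ∃ p q, pre (fun i => x (p + i)) n = w ∧ pre (fun i => x (q + i)) n = w ∧ x (p + n) ≠ x (q + n)}

theorem finite_dim [Finite C] (x : ℕ → C) (R : ℕ) (hR : ∀ n, (RSx x n).ncard ≤ R) :
    FiniteCodingDim (winningShift (orbitClosure x)) := by
  classical
  refine ⟨(R + 1) * Nat.card C, ?_⟩
  rintro α ⟨T, hT⟩ F
  have hα : ∀ i, α i ≤ Nat.card C := by
    intro i
    have hne : (level T i).Nonempty := by
      rw [← Set.ncard_pos (level_finite T i), ncard_level hT]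
      exact Finset.prod_pos fun i _ => Nat.succ_pos _
    obtain ⟨w, hw, hl⟩ := hne
    have := hT.2.2.1 w hw
    have h2 := Set.ncard_le_card {c | w ++ [c] ∈ T}
    rw [hl] at this
    omega
  have hfac : ∀ w ∈ T, ∃ p, pre (fun i => x (p + i)) w.length = w := by
    intro w hw
    obtain ⟨y, hy, hy2, _⟩ := tree_branch hT w hw
    obtain ⟨p, hp⟩ := hy w.length
    refine ⟨p, ?_⟩
    conv_rhs => rw [← hy2]
    rw [pre_eq_iff]
    exact fun i hi => (hp i hi).symm
  have hRS : ∀ n, α n ≠ 0 → (level T n) ⊆ RSx x n := by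
    rintro n hn w ⟨hw, hl⟩
    have h1 := hT.2.2.1 w hw
    have h2 : 1 < {c | w ++ [c] ∈ T}.ncard := by rw [h1, hl]; omega
    obtain ⟨a, ha, b, hb, hab⟩ := (Set.one_lt_ncard (Set.toFinite _)).1 h2
    obtain ⟨p, hp⟩ := hfac _ ha
    obtain ⟨q, hq⟩ := hfac _ hb
    rw [List.length_append, List.length_singleton, pre_succ, snoc_inj, hl] at hp hq
    exact ⟨p, q, hp.1, hq.1, by rw [hp.2, hq.2]; exact hab⟩
  let G := F.filter fun i => α i ≠ 0
  have hG : G.card ≤ R + 1 := by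
    rcases G.eq_empty_or_nonempty with h | h
    · simp [h]
    · let n := G.max' h
      have hn : α n ≠ 0 := (Finset.mem_filter.1 (G.max'_mem h)).2
      have hfin : (RSx x n).Finite := (List.finite_length_eq C n).subset (by
        rintro w ⟨p, q, h, _⟩
        change w.length = n
        rw [← h, length_pre])
      have h1 := (Set.ncard_le_ncard (hRS n hn) hfin).trans (hR n)
      rw [ncard_level hT] at h1
      have h2 : 2 ^ (G.erase n).card ≤ ∏ i ∈ Finset.range n, (α i + 1) := by
        calc 2 ^ (G.erase n).card ≤ ∏ i ∈ G.erase n, (α i + 1) := by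
              apply Finset.pow_card_le_prod
              intro i hi
              have := (Finset.mem_filter.1 (Finset.mem_of_mem_erase hi)).2
              omega
          _ ≤ _ := by
              apply Finset.prod_le_prod_of_subset_of_one_le'
              · intro i hi
                have h3 := G.le_max' i (Finset.mem_of_mem_erase hi)
                have h4 := Finset.ne_of_mem_erase hi
                rw [Finset.mem_range]
                exact lt_of_le_of_ne h3 h4
              · intro i _ _; omega
      have h3 := Finset.card_erase_of_mem (G.max'_mem h)
      have h4 : (G.erase n).card < 2 ^ (G.erase n).card := Nat.lt_two_pow_self
      change (G.erase n).card = _ at h3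
      omega
  calc ∑ i ∈ F, α i = ∑ i ∈ G, α i := by
        rw [Finset.sum_filter_ne_zero]
    _ ≤ G.card * Nat.card C := Finset.sum_le_card_nsmul _ _ _ fun i _ => hα i
    _ ≤ _ := Nat.mul_le_mul_right _ hG

end Dim


section Cassaigne

variable {D : Type}

/-- At most `B` windows of length `N` of the bi-infinite word `X` are pairwise distinct. -/
def DistBound (X : ℤ → D) (N : ℤ) (B : ℕ) : Prop :=
  ∀ (s : Finset (ℤ × ℤ)) (f : ℤ × ℤ → ℤ),
    (∀ a ∈ s, ∀ b ∈ s, (∀ u, 0 ≤ u → u < N → X (f a + u) = X (f b + u)) → a = b) → s.card ≤ B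

theorem shift_mul {X : ℤ → D} {lo hi q : ℤ} (hq : 0 < q)
    (h : ∀ y, lo + q ≤ y → y < hi → X y = X (y - q)) (k : ℕ) (y : ℤ)
    (hy : y < hi) (hk : lo ≤ y - k * q) : X y = X (y - k * q) := by
  induction k with
  | zero => simp
  | succ k ih =>
    push_cast at hk ⊢
    have e : (k + 1 : ℤ) * q = k * q + q := by ring
    have hkq : 0 ≤ (k : ℤ) * q := by positivity
    rw [e] at hk ⊢
    rw [ih (by omega), h (y - k * q) (by omega) (by omega)]
    congr 1; ring

theorem shift_dvd {X : ℤ → D} {lo hi q g : ℤ} (hq : 0 < q) (hg : 0 < g) (hd : q ∣ g)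
    (h : ∀ y, lo + q ≤ y → y < hi → X y = X (y - q)) (y : ℤ)
    (hy : y < hi) (hk : lo ≤ y - g) : X y = X (y - g) := by
  obtain ⟨k, rfl⟩ := hd
  have hk0 : 0 < k := by
    by_contra hne
    have : q * k ≤ 0 := mul_nonpos_of_nonneg_of_nonpos hq.le (by omega)
    omega
  lift k to ℕ using hk0.le
  rw [mul_comm] at hk ⊢
  exact shift_mul hq h k y hy hk

/-- `g` is a period of the factor `[lo, hi)`. -/
def Per (X : ℤ → D) (lo hi g : ℤ) : Prop := ∀ y, lo + g ≤ y → y < hi → X y = X (y - g)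

theorem per_sub {X : ℤ → D} {lo hi q g : ℤ} (hq : 0 < q) (hgq : q < g) (hlen : lo + q + g ≤ hi)
    (h1 : Per X lo hi q) (h2 : Per X lo hi g) : Per X lo hi (g - q) := by
  intro y hy1 hy2
  by_cases h : y + q < hi
  · have e1 := h1 (y + q) (by omega) h
    have e2 := h2 (y + q) (by omega) h
    rw [show y + q - q = y by ring] at e1
    rw [← e1, e2]; congr 1; ring
  · have e1 := h2 y (by omega) hy2
    have e2 := h1 (y - g + q) (by omega) (by omega)
    rw [show y - g + q - q = y - g by ring] at e2
    rw [e1, ← e2]; congr 1; ring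

theorem per_dvd {X : ℤ → D} {lo hi q δ : ℤ} (hq : 0 < q) (hqδ : q < δ)
    (hlen : lo + 2 * δ ≤ hi) (h1 : Per X lo hi q)
    (hmin : ∀ g, 0 < g → g < q → ¬ Per X lo hi g) (n : ℕ) :
    ∀ g : ℤ, g.toNat ≤ n → 0 < g → g < δ → Per X lo hi g → q ∣ g := by
  induction n with
  | zero => intro g hg hg0; omega
  | succ n ih =>
    intro g hg hg0 hgδ hp
    rcases lt_trichotomy g q with h | h | h
    · exact absurd hp (hmin g hg0 h)
    · rw [h]
    · have := ih (g - q) (by omega) (by omega) (by omega)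
        (per_sub hq h (by omega) h1 hp)
      have h2 := dvd_add this (dvd_refl q)
      simpa using h2

theorem exists_min_per {X : ℤ → D} {lo hi g : ℤ} (hg : 0 < g) (hp : Per X lo hi g) :
    ∃ q, 0 < q ∧ q ≤ g ∧ Per X lo hi q ∧ ∀ g', 0 < g' → g' < q → ¬ Per X lo hi g' := by
  classical
  have hex : ∃ k : ℕ, 0 < k ∧ Per X lo hi (k : ℤ) := ⟨g.toNat, by omega, by
    rwa [Int.toNat_of_nonneg hg.le]⟩
  refine ⟨(Nat.find hex : ℕ), by exact_mod_cast (Nat.find_spec hex).1, ?_, (Nat.find_spec hex).2, ?_⟩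
  · have := Nat.find_min' hex (m := g.toNat) ⟨by omega, by rwa [Int.toNat_of_nonneg hg.le]⟩
    omega
  · intro g' h1 h2 h3
    refine Nat.find_min hex (m := g'.toNat) (by omega) ⟨by omega, by
      rwa [Int.toNat_of_nonneg h1.le]⟩

/-- The first break of a predicate to the right. -/
theorem exists_first {P : ℤ → Prop} {lo z : ℤ} (hz : lo ≤ z) (hP : P z) :
    ∃ b, lo ≤ b ∧ b ≤ z ∧ P b ∧ ∀ y, lo ≤ y → y < b → ¬ P y := by
  classical
  have hex : ∃ k : ℕ, P (lo + k) := ⟨(z - lo).toNat, by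
    rwa [Int.toNat_of_nonneg (by omega), show lo + (z - lo) = z by ring]⟩
  refine ⟨lo + (Nat.find hex : ℕ), by omega, ?_, Nat.find_spec hex, ?_⟩
  · have := Nat.find_min' hex (m := (z - lo).toNat) (by
      rwa [Int.toNat_of_nonneg (by omega), show lo + (z - lo) = z by ring])
    omega
  · intro y h1 h2 h3
    refine Nat.find_min hex (m := (y - lo).toNat) (by omega) ?_
    rwa [Int.toNat_of_nonneg (by omega), show lo + (y - lo) = y by ring]

/-- The last break of a predicate to the left. -/
theorem exists_last {P : ℤ → Prop} {hi z : ℤ} (hz : z ≤ hi) (hP : P z) :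
    ∃ b, b ≤ hi ∧ z ≤ b ∧ P b ∧ ∀ y, y ≤ hi → b < y → ¬ P y := by
  obtain ⟨b, h1, h2, h3, h4⟩ := exists_first (P := fun y => P (-y)) (lo := -hi) (z := -z) (by omega)
    (by simpa using hP)
  exact ⟨-b, by omega, by omega, h3, fun y h5 h6 h7 => h4 (-y) (by omega) (by omega) (by simpa using h7)⟩

/-- Collision of the shifted windows attached to two positions. -/
def Coll (X : ℤ → D) (d : ℤ → ℤ) (c n : ℤ) (i i' g : ℤ) : Prop :=
  ∀ y, c ≤ y → y ≤ c + 2 * n → X (y - d i) = X (y - g - d i')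

/-- Data attached to a cell: positions `i` where the window of length `n` also occurs at
`i - d i` with a mismatch immediately after. -/
structure Cell (X : ℤ → D) (d : ℤ → ℤ) (c n δ : ℤ) (I : Finset ℤ) : Prop where
  δpos : 0 < δ
  len : 8 * δ ≤ n
  lo : ∀ i ∈ I, c ≤ i
  hi : ∀ i ∈ I, i < c + δ
  m : ∀ i ∈ I, ∀ y, i ≤ y → y < i + n → X y = X (y - d i)
  mm : ∀ i ∈ I, X (i + n) ≠ X (i + n - d i)
  e : ∀ i ∈ I, ∀ g, 0 < g → ∃ y, i ≤ y ∧ y ≤ i + n ∧ X y ≠ X (y - g)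

theorem Cell.count {X : ℤ → D} {d : ℤ → ℤ} {c n δ : ℤ} {I J : Finset ℤ} (h : Cell X d c n δ I)
    {B : ℕ} (hB : DistBound X (3 * n) B) (hJ : J ⊆ I)
    (hno : ∀ i ∈ J, ∀ i' ∈ J, ∀ g, 0 < g → g < δ → ¬ Coll X d c n i i' g) :
    J.card * δ.toNat ≤ B := by
  have hδ := h.δpos
  have hlen := h.len
  have hc := hB (J ×ˢ Finset.Ico 0 δ) (fun a => c - d a.1 - a.2) ?_
  · rw [Finset.card_product] at hc
    simpa using hc
  have key : ∀ i i' s s', 0 ≤ s → s ≤ s' → s' < δ →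
      (∀ u, 0 ≤ u → u < 3 * n → X (c - d i - s + u) = X (c - d i' - s' + u)) →
      Coll X d c n i i' (s' - s) := by
    intro i i' s s' h0 h1 h2 hu y hy1 hy2
    have := hu (y - c + s) (by omega) (by omega)
    rw [show c - d i - s + (y - c + s) = y - d i by ring,
      show c - d i' - s' + (y - c + s) = y - (s' - s) - d i' by ring] at this
    exact this
  have same : ∀ i ∈ J, ∀ i' ∈ J, i < i' →
      ¬ ∀ y, c ≤ y → y ≤ c + 2 * n → X (y - d i) = X (y - d i') := by
    intro i hi i' hi' hii hcol
    have l1 := h.lo i (hJ hi)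
    have l2 := h.hi i' (hJ hi')
    have e1 := hcol (i + n) (by omega) (by omega)
    have e2 := h.m i' (hJ hi') (i + n) (by omega) (by omega)
    exact h.mm i (hJ hi) (e2.trans e1.symm)
  rintro ⟨i, s⟩ ha ⟨i', s'⟩ hb hu
  simp only [Finset.mem_product, Finset.mem_Ico] at ha hb
  obtain ⟨hi, hs⟩ := ha
  obtain ⟨hi', hs'⟩ := hb
  dsimp only at hu
  rcases lt_trichotomy s s' with hlt | rfl | hlt
  · exact absurd (key i i' s s' hs.1 hlt.le hs'.2 hu)
      (hno i hi i' hi' _ (by omega) (by omega))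
  · have hk := key i i' s s hs.1 le_rfl hs'.2 hu
    have hk' : ∀ y, c ≤ y → y ≤ c + 2 * n → X (y - d i) = X (y - d i') := by
      intro y h1 h2
      simpa using hk y h1 h2
    rcases lt_trichotomy i i' with h1 | rfl | h1
    · exact absurd hk' (same i hi i' hi' h1)
    · rfl
    · exact absurd (fun y h1 h2 => (hk' y h1 h2).symm) (same i' hi' i hi h1)
  · exact absurd (key i' i s' s hs'.1 hlt.le hs.2 fun u h1 h2 => (hu u h1 h2).symm)
      (hno i' hi' i hi _ (by omega) (by omega))

theorem Cell.bound {X : ℤ → D} {d : ℤ → ℤ} {c n δ : ℤ} {I : Finset ℤ} (h : Cell X d c n δ I)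
    {B : ℕ} (hB : DistBound X (3 * n) B) : I.card * δ.toNat ≤ δ.toNat + 3 * B := by
  classical
  have hδ := h.δpos
  have hlen := h.len
  by_cases hcol : ∀ i ∈ I, ∀ i' ∈ I, ∀ g, 0 < g → g < δ → ¬ Coll X d c n i i' g
  · have := h.count hB (Finset.Subset.refl I) hcol
    omega
  -- general consequence of a collision
  have cons : ∀ i ∈ I, ∀ i' ∈ I, ∀ g, 0 < g → g < δ → Coll X d c n i i' g →
      ∀ y, i ≤ y → y < i + n → i' ≤ y - g → y - g < i' + n → X y = X (y - g) := by
    intro i hi i' hi' g hg hgδ hco y h1 h2 h3 h4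
    have l1 := h.lo i hi
    have l2 := h.hi i hi
    rw [h.m i hi y h1 h2, hco y (by omega) (by omega), ← h.m i' hi' (y - g) h3 h4]
  have cper : ∀ i ∈ I, ∀ i' ∈ I, ∀ g, 0 < g → g < δ → Coll X d c n i i' g →
      Per X (c + δ) (c + n) g := by
    intro i hi i' hi' g hg hgδ hco y h1 h2
    have l1 := h.lo i hi
    have l2 := h.hi i hi
    have l3 := h.lo i' hi'
    have l4 := h.hi i' hi'
    exact cons i hi i' hi' g hg hgδ hco y (by omega) (by omega) (by omega) (by omega)
  push Not at hcol
  obtain ⟨i0, hi0, i0', hi0', g0, hg0, hg0δ, hco0⟩ := hcol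
  obtain ⟨q, hq, hqg, hqP, hqmin⟩ := exists_min_per hg0 (cper i0 hi0 i0' hi0' g0 hg0 hg0δ hco0)
  have hdvd : ∀ i ∈ I, ∀ i' ∈ I, ∀ g, 0 < g → g < δ → Coll X d c n i i' g → q ∣ g := by
    intro i hi i' hi' g hg hgδ hco
    exact per_dvd hq (by omega) (by omega) hqP hqmin g.toNat g le_rfl hg hgδ
      (cper i hi i' hi' g hg hgδ hco)
  let brk : ℤ → Prop := fun y => X y ≠ X (y - q)
  have hnobrk : ∀ y, c + δ + q ≤ y → y < c + n → ¬ brk y := by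
    intro y h1 h2 h3
    exact h3 (hqP y h1 h2)
  let IG := I.filter fun i => ∃ y, c + δ + q ≤ y ∧ y < i + n ∧ brk y
  let IR := I.filter fun i => ¬ ∃ y, c + δ + q ≤ y ∧ y < i + n ∧ brk y
  let IB := IR.filter fun i => brk (i + n)
  let IQ' := IR.filter fun i => ¬ brk (i + n)
  have c1 : I.card = IG.card + IR.card := (Finset.card_filter_add_card_filter_not _).symm
  have c2 : IR.card = IB.card + IQ'.card := (Finset.card_filter_add_card_filter_not _).symm
  -- class G
  have hG : IG.card * δ.toNat ≤ B := by
    refine h.count hB (Finset.filter_subset _ _) ?_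
    intro i hi i' hi' g hg hgδ hco
    obtain ⟨hiI, y, hy1, hy2, hy3⟩ := Finset.mem_filter.1 hi
    obtain ⟨hiI', y', hy1', hy2', hy3'⟩ := Finset.mem_filter.1 hi'
    obtain ⟨b, hb1, hb2, hb3, hb4⟩ := exists_first (P := brk) hy1 hy3
    have hby' : b ≤ y' := by
      by_contra hne
      exact hb4 y' hy1' (by omega) hy3'
    have hbn : c + n ≤ b := by
      by_contra hne
      exact hnobrk b hb1 (by omega) hb3
    have l1 := h.lo i hiI
    have l2 := h.hi i hiI
    have l3 := h.lo i' hiI'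
    have l4 := h.hi i' hiI'
    have e1 := cons i hiI i' hiI' g hg hgδ hco b (by omega) (by omega) (by omega) (by omega)
    have hd := hdvd i hiI i' hiI' g hg hgδ hco
    have hrun : ∀ y, c + δ + q ≤ y → y < b → X y = X (y - q) := fun y h1 h2 => by
      by_contra hne; exact hb4 y h1 h2 hne
    apply hb3
    rw [e1]
    rcases eq_or_lt_of_le (Int.le_of_dvd hg hd) with heq | hlt
    · rw [heq]
    · have := shift_dvd (lo := c + δ) (g := g - q) hq (by omega) (dvd_sub hd (dvd_refl q)) hrun (b - q)
        (by omega) (by omega)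
      rw [this]; congr 1; ring
  -- exceptional class
  have hBc : IB.card ≤ 1 := by
    rw [Finset.card_le_one]
    have aux : ∀ i ∈ IB, ∀ i' ∈ IB, ¬ i < i' := by
      intro i hi i' hi' hlt
      obtain ⟨hi1, hi2⟩ := Finset.mem_filter.1 hi
      obtain ⟨hi1', hi2'⟩ := Finset.mem_filter.1 hi'
      obtain ⟨hi3, hi4⟩ := Finset.mem_filter.1 hi1
      obtain ⟨hi3', hi4'⟩ := Finset.mem_filter.1 hi1'
      have l1 := h.lo i hi3
      exact hi4' ⟨i + n, by omega, by omega, hi2⟩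
    intro i hi i' hi'
    have h1 := aux i hi i' hi'
    have h2 := aux i' hi' i hi
    omega
  -- remaining classes
  have hPQ : IQ'.card * δ.toNat ≤ 2 * B := by
    rcases IQ'.eq_empty_or_nonempty with hem | ⟨j, hj⟩
    · simp [hem]
    have mem : ∀ i ∈ IQ', i ∈ I ∧ ∀ y, c + δ + q ≤ y → y ≤ i + n → ¬ brk y := by
      intro i hi
      obtain ⟨hi1, hi2⟩ := Finset.mem_filter.1 hi
      obtain ⟨hi3, hi4⟩ := Finset.mem_filter.1 hi1
      refine ⟨hi3, fun y h1 h2 h3 => ?_⟩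
      rcases eq_or_lt_of_le h2 with rfl | h2
      · exact hi2 h3
      · exact hi4 ⟨y, h1, h2, h3⟩
    have hbk : ∀ i ∈ IQ', ∃ y, i ≤ y ∧ y ≤ c + δ + q - 1 ∧ brk y := by
      intro i hi
      obtain ⟨hiI, hno⟩ := mem i hi
      obtain ⟨y, h1, h2, h3⟩ := h.e i hiI q hq
      refine ⟨y, h1, ?_, h3⟩
      by_contra hne
      exact hno y (by omega) h2 h3
    obtain ⟨z, hz1, hz2, hz3⟩ := hbk j hj
    obtain ⟨e, he1, he2, he3, he4⟩ := exists_last (P := brk) hz2 hz3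
    -- `e = a - 1 + q`
    have hie : ∀ i ∈ IQ', i ≤ e := by
      intro i hi
      obtain ⟨y, h1, h2, h3⟩ := hbk i hi
      by_contra hne
      exact he4 y h2 (by omega) h3
    have hrun : ∀ i ∈ IQ', ∀ y, e < y → y ≤ i + n → X y = X (y - q) := by
      intro i hi y h1 h2
      by_contra hne
      by_cases h3 : y ≤ c + δ + q - 1
      · exact he4 y h3 h1 hne
      · exact (mem i hi).2 y (by omega) h2 hne
    let IP := IQ'.filter fun i => i ≤ e - q
    let IQ := IQ'.filter fun i => ¬ i ≤ e - q
    have c3 : IQ'.card = IP.card + IQ.card := (Finset.card_filter_add_card_filter_not _).symm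
    have hP : IP.card * δ.toNat ≤ B := by
      refine h.count hB (fun i hi => (mem i (Finset.mem_filter.1 hi).1).1) ?_
      intro i hi i' hi' g hg hgδ hco
      obtain ⟨hi1, hi2⟩ := Finset.mem_filter.1 hi
      obtain ⟨hi1', hi2'⟩ := Finset.mem_filter.1 hi'
      have hiI := (mem i hi1).1
      have hiI' := (mem i' hi1').1
      have l1 := h.lo i hiI
      have l2 := h.hi i hiI
      have l3 := h.lo i' hiI'
      have l4 := h.hi i' hiI'
      have hd := hdvd i hiI i' hiI' g hg hgδ hco
      have e1 := cons i hiI i' hiI' g hg hgδ hco (e - q + g) (by omega) (by omega) (by omega) (by omega)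
      rw [show e - q + g - g = e - q by ring] at e1
      apply he3
      rw [← e1]
      rcases eq_or_lt_of_le (Int.le_of_dvd hg hd) with heq | hlt
      · rw [← heq]; congr 1; ring
      · have := shift_dvd (lo := e - q + 1) (hi := i + n + 1) (g := g - q) hq (by omega) (dvd_sub hd (dvd_refl q))
          (fun y h1 h2 => hrun i hi1 y (by omega) (by omega)) (e - q + g) (by omega) (by omega)
        rw [this]; congr 1; ring
    have hQ : IQ.card * δ.toNat ≤ B := by
      refine h.count hB (fun i hi => (mem i (Finset.mem_filter.1 hi).1).1) ?_
      intro i hi i' hi' g hg hgδ hco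
      obtain ⟨hi1, hi2⟩ := Finset.mem_filter.1 hi
      obtain ⟨hi1', hi2'⟩ := Finset.mem_filter.1 hi'
      have hiI := (mem i hi1).1
      have hiI' := (mem i' hi1').1
      have l1 := h.lo i hiI
      have l2 := h.hi i hiI
      have l3 := h.lo i' hiI'
      have l4 := h.hi i' hiI'
      have hd := hdvd i hiI i' hiI' g hg hgδ hco
      have hqg' := Int.le_of_dvd hg hd
      rcases lt_trichotomy (i + n) (i' + n + g) with hlt | heq | hlt
      · have e1 := hco (i + n) (by omega) (by omega)
        have e2 := h.m i' hiI' (i + n - g) (by omega) (by omega)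
        have e3 := shift_dvd (lo := e - q + 1) (hi := i + n + 1) (g := g) hq hg hd
          (fun y h1 h2 => hrun i hi1 y (by omega) (by omega)) (i + n) (by omega) (by omega)
        exact h.mm i hiI (e3.trans (e2.trans e1.symm))
      · have := hie i hi1
        omega
      · have e1 := hco (i' + n + g) (by omega) (by omega)
        have e2 := h.m i hiI (i' + n + g) (by omega) (by omega)
        have e3 := shift_dvd (lo := e - q + 1) (hi := i + n + 1) (g := g) hq hg hd
          (fun y h1 h2 => hrun i hi1 y (by omega) (by omega)) (i' + n + g) (by omega) (by omega)
        rw [show i' + n + g - g = i' + n by ring] at e1 e3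
        exact h.mm i' hiI' (e3.symm.trans (e2.trans e1))
    rw [c3, add_mul]
    omega
  rw [c1, c2, add_mul, add_mul]
  have : IB.card * δ.toNat ≤ 1 * δ.toNat := Nat.mul_le_mul_right _ hBc
  omega

theorem all_bound {X : ℤ → D} {d : ℤ → ℤ} {n δ : ℤ} {I : Finset ℤ} (hδ : 0 < δ) (hlen : 8 * δ ≤ n)
    (hm : ∀ i ∈ I, ∀ y, i ≤ y → y < i + n → X y = X (y - d i))
    (hmm : ∀ i ∈ I, X (i + n) ≠ X (i + n - d i))
    (he : ∀ i ∈ I, ∀ g, 0 < g → ∃ y, i ≤ y ∧ y ≤ i + n ∧ X y ≠ X (y - g))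
    {B2 B3 : ℕ} (hB2 : DistBound X (2 * n + 1) B2) (hB3 : DistBound X (3 * n) B3) :
    I.card * (δ.toNat * δ.toNat) ≤ B2 * (δ.toNat + 3 * B3) := by
  classical
  let K := I.image fun i => i / δ
  have hK : K.card * δ.toNat ≤ B2 := by
    have hc := hB2 (K ×ˢ Finset.Ico 0 δ) (fun a => (a.1 - 1) * δ + a.2) ?_
    · rw [Finset.card_product] at hc
      simpa using hc
    have key : ∀ κ ∈ K, ∀ s, 0 ≤ s → s < δ → ∀ m, m < (κ - 1) * δ + s →
        ¬ ∀ u, 0 ≤ u → u < 2 * n + 1 → X (m + u) = X ((κ - 1) * δ + s + u) := by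
      intro κ hκ s hs1 hs2 m hm hu
      obtain ⟨i, hi, rfl⟩ := Finset.mem_image.1 hκ
      have d1 := Int.emod_add_mul_ediv i δ
      have d2 := Int.emod_nonneg i hδ.ne'
      have d3 := Int.emod_lt_of_pos i hδ
      have ee : (i / δ - 1) * δ + s = δ * (i / δ) - δ + s := by ring
      rw [ee] at hm hu
      set m' := δ * (i / δ) - δ + s
      obtain ⟨y, h1, h2, h3⟩ := he i hi (m' - m) (by omega)
      have := hu (y - m') (by omega) (by omega)
      rw [show m' + (y - m') = y by ring, show m + (y - m') = y - (m' - m) by ring] at this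
      exact h3 this.symm
    rintro ⟨κ, s⟩ ha ⟨κ', s'⟩ hb hu
    simp only [Finset.mem_product, Finset.mem_Ico] at ha hb
    dsimp only at hu
    rcases lt_trichotomy ((κ - 1) * δ + s) ((κ' - 1) * δ + s') with hlt | heq | hlt
    · exact absurd hu (key κ' hb.1 s' hb.2.1 hb.2.2 _ hlt)
    · have e1 : κ = κ' := by
        rcases lt_trichotomy κ κ' with h | h | h
        · have : (κ + 1) * δ ≤ κ' * δ := mul_le_mul_of_nonneg_right (by omega) hδ.le
          have e1 : (κ + 1) * δ = (κ - 1) * δ + 2 * δ := by ring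
          have e2 : κ' * δ = (κ' - 1) * δ + δ := by ring
          omega
        · exact h
        · have : (κ' + 1) * δ ≤ κ * δ := mul_le_mul_of_nonneg_right (by omega) hδ.le
          have e1 : (κ' + 1) * δ = (κ' - 1) * δ + 2 * δ := by ring
          have e2 : κ * δ = (κ - 1) * δ + δ := by ring
          omega
      subst e1
      have : s = s' := by omega
      rw [this]
    · exact absurd (fun u h1 h2 => (hu u h1 h2).symm) (key κ ha.1 s ha.2.1 ha.2.2 _ hlt)
  have hcell : ∀ κ ∈ K, (I.filter fun i => i / δ = κ).card * δ.toNat ≤ δ.toNat + 3 * B3 := by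
    intro κ hκ
    have hc : Cell X d (κ * δ) n δ (I.filter fun i => i / δ = κ) := by
      have aux : ∀ i ∈ (I.filter fun i => i / δ = κ), i ∈ I ∧ κ * δ ≤ i ∧ i < κ * δ + δ := by
        intro i hi
        obtain ⟨h1, rfl⟩ := Finset.mem_filter.1 hi
        have d1 := Int.emod_add_mul_ediv i δ
        have d2 := Int.emod_nonneg i hδ.ne'
        have d3 := Int.emod_lt_of_pos i hδ
        rw [mul_comm] at d1
        exact ⟨h1, by omega, by omega⟩
      exact ⟨hδ, hlen, fun i hi => (aux i hi).2.1, fun i hi => (aux i hi).2.2,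
        fun i hi => hm i (aux i hi).1, fun i hi => hmm i (aux i hi).1, fun i hi => he i (aux i hi).1⟩
    exact hc.bound hB3
  have hsum : I.card = ∑ κ ∈ K, (I.filter fun i => i / δ = κ).card :=
    Finset.card_eq_sum_card_image (fun i => i / δ) I
  calc I.card * (δ.toNat * δ.toNat)
      = (∑ κ ∈ K, (I.filter fun i => i / δ = κ).card * δ.toNat) * δ.toNat := by
        rw [hsum, ← mul_assoc, Finset.sum_mul]
    _ ≤ (∑ κ ∈ K, (δ.toNat + 3 * B3)) * δ.toNat :=
        Nat.mul_le_mul_right _ (Finset.sum_le_sum hcell)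
    _ = (K.card * δ.toNat) * (δ.toNat + 3 * B3) := by
        rw [Finset.sum_const, smul_eq_mul]; ring
    _ ≤ _ := Nat.mul_le_mul_right _ hK

end Cassaigne


section Final

variable {C : Type}

/-- Extension of a one-sided word to the left by blanks. -/
def extZ (x : ℕ → C) (y : ℤ) : Option C := if 0 ≤ y then some (x y.toNat) else none

theorem extZ_nat (x : ℕ → C) (m : ℕ) : extZ x (m : ℤ) = some (x m) := by simp [extZ]

theorem extZ_neg (x : ℕ → C) (y : ℤ) (hy : y < 0) : extZ x y = none := by
  simp [extZ, hy]

theorem distBound_extZ [Finite C] (x : ℕ → C) (N : ℕ) :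
    DistBound (extZ x) (N : ℤ) (factorComplexity x N + N + 1) := by
  classical
  intro s f hs
  let win : ℤ → List (Option C) := fun m => List.ofFn fun i : Fin N => extZ x (m + i)
  let W1 : Set (List C) := { w : List C | ∃ p : ℕ, w = List.ofFn fun i : Fin N => x (p + i) }
  have hW1 : W1.Finite := (List.finite_length_eq C N).subset (by
    rintro w ⟨p, rfl⟩
    simp)
  let W : Set (List (Option C)) :=
    (List.map some '' W1 ∪ win '' (Finset.Ico (-(N : ℤ)) 0 : Finset ℤ)) ∪ {List.replicate N none}
  have hWf : W.Finite := ((hW1.image _).union ((Finset.finite_toSet _).image _)).union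
    (Set.finite_singleton _)
  have hWc : W.ncard ≤ factorComplexity x N + N + 1 := by
    refine (Set.ncard_union_le _ _).trans ?_
    rw [Set.ncard_singleton]
    refine Nat.add_le_add_right ((Set.ncard_union_le _ _).trans ?_) 1
    refine Nat.add_le_add (Set.ncard_image_le hW1) ?_
    refine (Set.ncard_image_le (Finset.finite_toSet _)).trans ?_
    rw [Set.ncard_coe_finset]
    simp
  have hwin : ∀ m, win m ∈ W := by
    intro m
    rcases le_or_gt 0 m with h | h
    · left; left
      lift m to ℕ using h
      refine ⟨_, ⟨m, rfl⟩, ?_⟩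
      rw [List.map_ofFn]
      simp only [win]
      refine congrArg List.ofFn (funext fun i => ?_)
      symm
      have := extZ_nat x (m + i)
      push_cast at this
      rw [this]; rfl
    · by_cases h2 : -(N : ℤ) ≤ m
      · left; right
        exact ⟨m, by simp [h, h2], rfl⟩
      · right
        have : win m = List.replicate N none := by
          rw [List.eq_replicate_iff]
          refine ⟨by simp [win], ?_⟩
          intro b hb
          simp only [win, List.mem_ofFn] at hb
          obtain ⟨i, rfl⟩ := hb
          exact extZ_neg x _ (by have := i.2; omega)
        exact this
  have h1 : s.card = (s.image fun a => win (f a)).card := by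
    rw [Finset.card_image_of_injOn]
    intro a ha b hb hab
    refine hs a ha b hb ?_
    intro u hu1 hu2
    lift u to ℕ using hu1
    have := List.ofFn_injective hab
    exact congrFun this ⟨u, by omega⟩
  rw [h1, ← Set.ncard_coe_finset]
  refine (Set.ncard_le_ncard ?_ hWf).trans hWc
  intro w hw
  simp only [Finset.coe_image, Set.mem_image] at hw
  obtain ⟨a, _, rfl⟩ := hw
  exact hwin _

theorem RSx_finite [Finite C] (x : ℕ → C) (n : ℕ) : (RSx x n).Finite :=
  (List.finite_length_eq C n).subset (by
    rintro w ⟨p, q, h, _⟩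
    change w.length = n
    rw [← h, length_pre])

theorem RSx_le_complexity [Finite C] (x : ℕ → C) (n : ℕ) :
    (RSx x n).ncard ≤ factorComplexity x n := by
  refine Set.ncard_le_ncard ?_ ?_
  · rintro w ⟨p, q, h, _⟩
    exact ⟨p, h.symm⟩
  · refine (List.finite_length_eq C n).subset ?_
    rintro w ⟨p, rfl⟩
    simp

theorem RSx_data (x : ℕ → C) (n : ℕ) (w : List C) (hw : w ∈ RSx x n) :
    ∃ (i : ℕ) (d : ℤ), pre (fun j => x (i + j)) n = w ∧
      (∀ y : ℤ, (i : ℤ) ≤ y → y < i + n → extZ x y = extZ x (y - d)) ∧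
      extZ x ((i : ℤ) + n) ≠ extZ x (i + n - d) ∧
      ∀ g : ℤ, 0 < g → ∃ y : ℤ, (i : ℤ) ≤ y ∧ y ≤ i + n ∧ extZ x y ≠ extZ x (y - g) := by
  classical
  obtain ⟨p0, q0, hp0, hq0, hne⟩ := hw
  have main : ∀ a b : C, a ≠ b → ∀ p q : ℕ, p < q → pre (fun j => x (p + j)) n = w →
      pre (fun j => x (q + j)) n = w → x (p + n) = a → x (q + n) = b →
      (∀ q' < q, ¬ (pre (fun j => x (q' + j)) n = w ∧ x (q' + n) = b)) →
      ∃ (i : ℕ) (d : ℤ), pre (fun j => x (i + j)) n = w ∧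
      (∀ y : ℤ, (i : ℤ) ≤ y → y < i + n → extZ x y = extZ x (y - d)) ∧
      extZ x ((i : ℤ) + n) ≠ extZ x (i + n - d) ∧
      ∀ g : ℤ, 0 < g → ∃ y : ℤ, (i : ℤ) ≤ y ∧ y ≤ i + n ∧ extZ x y ≠ extZ x (y - g) := by
    intro a b hab p q hpq hp hq hpa hqb hmin
    have hpqj := (pre_eq_iff _ _ _).1 (hq.trans hp.symm)
    refine ⟨q, q - p, hq, ?_, ?_, ?_⟩
    · intro y h1 h2
      obtain ⟨j, rfl⟩ := Int.le.dest h1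
      have e1 := extZ_nat x (q + j)
      have e2 := extZ_nat x (p + j)
      push_cast at e1 e2
      rw [e1, show (q : ℤ) + j - (q - p) = p + j by ring, e2]
      exact congrArg some (hpqj j (by omega))
    · have e1 := extZ_nat x (q + n)
      have e2 := extZ_nat x (p + n)
      push_cast at e1 e2
      rw [e1, show (q : ℤ) + n - (q - p) = p + n by ring, e2, hpa, hqb]
      intro h
      exact hab (Option.some.inj h).symm
    · intro g hg
      by_contra hcon
      push Not at hcon
      have h0 : g ≤ q := by
        by_contra hlt
        have := hcon q le_rfl (by omega)
        rw [extZ_nat, extZ_neg _ _ (by omega)] at this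
        cases this
      obtain ⟨q', hq'⟩ := Int.eq_ofNat_of_zero_le (show 0 ≤ (q : ℤ) - g by omega)
      have hj : ∀ j ≤ n, x (q + j) = x (q' + j) := by
        intro j hj
        have := hcon (q + j) (by omega) (by omega)
        rw [show (q : ℤ) + j - g = q' + j by omega] at this
        have e1 := extZ_nat x (q + j)
        have e2 := extZ_nat x (q' + j)
        push_cast at e1 e2
        rw [e1, e2] at this
        exact Option.some.inj this
      refine hmin q' (by omega) ⟨?_, ?_⟩
      · rw [← hq, pre_eq_iff]
        exact fun j hj' => (hj j hj'.le).symm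
      · rw [← hj n le_rfl, hqb]
  have hexp : ∃ p, pre (fun j => x (p + j)) n = w ∧ x (p + n) = x (p0 + n) := ⟨p0, hp0, rfl⟩
  have hexq : ∃ q, pre (fun j => x (q + j)) n = w ∧ x (q + n) = x (q0 + n) := ⟨q0, hq0, rfl⟩
  have sp := Nat.find_spec hexp
  have sq := Nat.find_spec hexq
  rcases lt_trichotomy (Nat.find hexp) (Nat.find hexq) with h | h | h
  · exact main _ _ hne _ _ h sp.1 sq.1 sp.2 sq.2 fun q' hq' => Nat.find_min hexq hq'
  · rw [h] at sp
    exact absurd (sp.2.symm.trans sq.2) hne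
  · exact main _ _ hne.symm _ _ h sq.1 sp.1 sq.2 sp.2 fun q' hq' => Nat.find_min hexp hq'

theorem RSx_bound [Finite C] (x : ℕ → C) (c : ℕ)
    (hcomp : ∀ n : ℕ, factorComplexity x n ≤ c * n + c) :
    ∃ R, ∀ n, (RSx x n).ncard ≤ R := by
  classical
  let K := 49 * c + 50
  refine ⟨K * (1 + 3 * K) + 8 * c, fun n => ?_⟩
  by_cases hn : n < 8
  · have h1 := (RSx_le_complexity x n).trans (hcomp n)
    have h2 : c * n ≤ c * 7 := Nat.mul_le_mul_left _ (by omega)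
    omega
  obtain ⟨δ, hδ⟩ : ∃ δ, δ = n / 8 := ⟨_, rfl⟩
  have hδ0 : 0 < δ := by omega
  choose! i d h1 h2 h3 h4 using RSx_data x n
  have hfin := RSx_finite x n
  have inj : Set.InjOn (fun w => (i w : ℤ)) (RSx x n) := by
    intro w hw w' hw' h
    have h : i w = i w' := Int.ofNat.inj h
    rw [← h1 w hw, ← h1 w' hw', h]
  let I : Finset ℤ := hfin.toFinset.image fun w => (i w : ℤ)
  have hI : I.card = (RSx x n).ncard := by
    rw [Finset.card_image_of_injOn (by simpa using inj), Set.ncard_eq_toFinset_card _ hfin]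
  have hex : ∀ j ∈ I, ∃ w ∈ RSx x n, (i w : ℤ) = j := by
    intro j hj
    obtain ⟨w, hw, rfl⟩ := Finset.mem_image.1 hj
    exact ⟨w, by simpa using hw, rfl⟩
  choose! g hg1 hg2 using hex
  have hb := all_bound (X := extZ x) (d := fun j => d (g j)) (n := n) (δ := δ) (I := I)
    (by omega) (by omega)
    (fun j hj y => by
      have := h2 (g j) (hg1 j hj) y
      rwa [hg2 j hj] at this)
    (fun j hj => by
      have := h3 (g j) (hg1 j hj)
      rwa [hg2 j hj] at this)
    (fun j hj => by
      have := h4 (g j) (hg1 j hj)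
      rwa [hg2 j hj] at this)
    (B2 := factorComplexity x (2 * n + 1) + (2 * n + 1) + 1)
    (B3 := factorComplexity x (3 * n) + 3 * n + 1)
    (by have := distBound_extZ x (2 * n + 1); push_cast at this; exact this)
    (by have := distBound_extZ x (3 * n); push_cast at this; exact this)
  rw [hI] at hb
  simp only [Int.toNat_natCast] at hb
  have b2 : factorComplexity x (2 * n + 1) + (2 * n + 1) + 1 ≤ K * δ := by
    have e1 := hcomp (2 * n + 1)
    have e2 : c * (2 * n + 1) + c ≤ c * (49 * δ) := by
      rw [← Nat.mul_succ]; exact Nat.mul_le_mul_left _ (by omega)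
    have e3 : K * δ = c * (49 * δ) + 50 * δ := by simp only [K]; ring
    omega
  have b3 : factorComplexity x (3 * n) + 3 * n + 1 ≤ K * δ := by
    have e1 := hcomp (3 * n)
    have e2 : c * (3 * n) + c ≤ c * (49 * δ) := by
      rw [← Nat.mul_succ]; exact Nat.mul_le_mul_left _ (by omega)
    have e3 : K * δ = c * (49 * δ) + 50 * δ := by simp only [K]; ring
    omega
  have hb2 : (RSx x n).ncard * (δ * δ) ≤ (K * (1 + 3 * K)) * (δ * δ) := by
    refine hb.trans ?_
    calc _ ≤ (K * δ) * (δ + 3 * (K * δ)) := Nat.mul_le_mul b2 (by omega)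
      _ = _ := by ring
  have := Nat.le_of_mul_le_mul_right hb2 (by positivity)
  omega

end Final

/-- If `S` is an addable ANS and `x` is an `S`-automatic word over a finite
alphabet with sublinear factor complexity, then the winning shift of the subshift generated
by `x` is `S`-codable. -/
theorem stmt0 {A C : Type} [Fintype A] [Fintype C] (S : ANS A) (hadd : S.Addable)
    (x : ℕ → C) (hx : SAutomatic S x)
    (hcomp : ∃ c : ℕ, ∀ n : ℕ, factorComplexity x n ≤ c * n + c) :
    SCodable S (winningShift (orbitClosure x)) := by
  obtain ⟨c, hc⟩ := hcomp
  obtain ⟨R, hR⟩ := RSx_bound x c hc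
  exact ⟨weak_codable S hadd x hx, finite_dim x R hR⟩
end

section
/- Let S = (L, ≺) be an addable abstract numeration system, let x be an S-automatic infinite word over a finite alphabet C, and let X = O(x) be the subshift generated by x. Then the winning shift W(X) ⊆ ℕ^ℕ is weakly S-codable. -/
open scoped BigOperators

namespace WSC

/-- Regularity of a predicate on words. -/
def Reg {α : Type} (P : List α → Prop) : Prop :=
  ∃ (σ : Type) (_ : Fintype σ) (M : DFA α σ), ∀ w : List α, w ∈ M.accepts ↔ P w

theorem Reg.of_iff {α : Type} {P Q : List α → Prop} (h : Reg P) (e : ∀ w, Q w ↔ P w) : Reg Q := by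
  have : Q = P := by
    funext w
    exact propext (e w)
  rwa [this]

theorem Reg.bool {α I : Type} [Fintype I] {P : I → List α → Prop} (h : ∀ i, Reg (P i))
    (F : (I → Prop) → Prop) : Reg (fun w => F (fun i => P i w)) := by
  classical
  choose σ hσ M hM using h
  refine ⟨∀ i, σ i, inferInstance,
    { step := fun s a i => (M i).step (s i) a
      start := fun i => (M i).start
      accept := {s | F (fun i => s i ∈ (M i).accept)} }, fun w => ?_⟩
  have key : ∀ (w : List α) (s : ∀ i, σ i), 
      List.foldl (fun (s : ∀ i, σ i) a i => (M i).step (s i) a) s w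
        = fun i => List.foldl (M i).step (s i) w := by
    intro w
    induction w with
    | nil => intro s; rfl
    | cons a w ih => intro s; simp only [List.foldl_cons]; rw [ih]
  have h2 : ∀ i, ((List.foldl (M i).step (M i).start w) ∈ (M i).accept) = P i w :=
    fun i => propext (hM i w)
  simp only [DFA.mem_accepts, DFA.eval, DFA.evalFrom, key, Set.mem_ofPred_eq, h2]

theorem Reg.and {α : Type} {P Q : List α → Prop} (hP : Reg P) (hQ : Reg Q) :
    Reg (fun w => P w ∧ Q w) := by
  have := Reg.bool (I := Bool) (P := fun b => if b then P else Q)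
    (by intro b; cases b <;> simpa) (fun f => f true ∧ f false)
  simpa using this

theorem Reg.comap {α β : Type} {P : List β → Prop} (h : Reg P) (f : α → β) :
    Reg (fun w : List α => P (w.map f)) := by
  obtain ⟨σ, hσ, M, hM⟩ := h
  refine ⟨σ, hσ, M.comap f, fun w => ?_⟩
  show _ ↔ P (w.map f)
  rw [← hM, DFA.accepts_comap]
  rfl

theorem Reg.proj {α β : Type} {P : List α → Prop} (h : Reg P) (f : α → β) :
    Reg (fun w : List β => ∃ u : List α, u.map f = w ∧ P u) := by
  classical
  obtain ⟨σ, hσ, M, hM⟩ := h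
  let stp : Set σ → β → Set σ := fun S b => {t | ∃ s ∈ S, ∃ a, f a = b ∧ M.step s a = t}
  refine ⟨Set σ, inferInstance,
    { step := stp
      start := {M.start}
      accept := {S | ∃ s ∈ S, s ∈ M.accept} }, fun w => ?_⟩
  have key : ∀ (w : List β) (S : Set σ), 
      List.foldl stp S w
        = {t | ∃ s ∈ S, ∃ u : List α, u.map f = w ∧ M.evalFrom s u = t} := by
    intro w
    induction w with
    | nil => intro S; ext t; simp
    | cons b w ih =>
      intro S
      simp only [List.foldl_cons]; rw [ih]
      ext t
      constructor
      · rintro ⟨s', ⟨s, hs, a, ha, rfl⟩, u, hu, rfl⟩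
        exact ⟨s, hs, a :: u, by simp [ha, hu], by simp⟩
      · rintro ⟨s, hs, u, hu, rfl⟩
        cases u with
        | nil => simp at hu
        | cons a u =>
          simp only [List.map_cons, List.cons.injEq] at hu
          exact ⟨M.step s a, ⟨s, hs, a, hu.1, rfl⟩, u, hu.2, by simp⟩
  simp only [DFA.mem_accepts, DFA.eval, DFA.evalFrom, key]
  constructor
  · rintro ⟨t, ⟨s, hs, u, hu, rfl⟩, ht⟩
    refine ⟨u, hu, (hM u).1 ?_⟩
    rw [Set.mem_singleton_iff] at hs
    subst hs
    exact ht
  · rintro ⟨u, hu, hP⟩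
    exact ⟨M.eval u, ⟨M.start, rfl, u, hu, rfl⟩, (hM u).2 hP⟩

theorem Reg.leftQuot {α : Type} {P : List α → Prop} (h : Reg P) (K : Set (List α)) :
    Reg (fun w : List α => ∃ u ∈ K, P (u ++ w)) := by
  classical
  obtain ⟨σ, hσ, M, hM⟩ := h
  have h1 : ∀ s : σ, Reg (fun w => M.evalFrom s w ∈ M.accept) := fun s =>
    ⟨σ, hσ, { step := M.step, start := s, accept := M.accept }, fun w => Iff.rfl⟩
  refine (Reg.bool h1 (fun f => ∃ u ∈ K, f (M.eval u))).of_iff fun w => ?_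
  refine exists_congr fun u => and_congr_right fun _ => ?_
  rw [← hM, DFA.mem_accepts]
  simp [DFA.eval, DFA.evalFrom_of_append]

theorem Reg.dropWhile {α : Type} {P : List α → Prop} (h : Reg P) (q : α → Bool) :
    Reg (fun w : List α => P (w.dropWhile q)) := by
  classical
  obtain ⟨σ, hσ, M, hM⟩ := h
  let stp : σ × Bool → α → σ × Bool := fun s a =>
    if s.2 = false ∧ q a = true then s else (M.step s.1 a, true)
  refine ⟨σ × Bool, inferInstance,
    { step := stp
      start := (M.start, false)
      accept := {s | s.1 ∈ M.accept} }, fun w => ?_⟩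
  have key1 : ∀ (w : List α) (s : σ), List.foldl stp (s, true) w = (M.evalFrom s w, true) := by
    intro w
    induction w with
    | nil => intro s; rfl
    | cons a w ih => intro s; simp [stp, ih]
  have key2 : ∀ (w : List α) (s : σ), 
      (List.foldl stp (s, false) w).1 = M.evalFrom s (w.dropWhile q) := by
    intro w
    induction w with
    | nil => intro s; rfl
    | cons a w ih =>
      intro s
      by_cases ha : q a = true
      · rw [List.foldl_cons, List.dropWhile_cons_of_pos ha, ← ih]
        simp [stp, ha]
      · rw [List.foldl_cons, List.dropWhile_cons_of_neg ha]
        simp [stp, ha, key1]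
  show _ ↔ P (w.dropWhile q)
  rw [← hM]
  show (List.foldl stp (M.start, false) w).1 ∈ M.accept ↔ _
  rw [key2]
  rfl

theorem Reg.head {α : Type} (q : α → Prop) :
    Reg (fun w : List α => ∀ a ∈ w.head?, ¬ q a) := by
  classical
  let stp : Option Prop → α → Option Prop := fun s a =>
    match s with
    | none => some (q a)
    | some b => some b
  have key1 : ∀ (w : List α) (s : Prop), List.foldl stp (some s) w = some s := by
    intro w
    induction w with
    | nil => intro s; rfl
    | cons a w ih => intro s; simp [stp, ih]
  refine ⟨Option Prop, inferInstance,
    { step := stp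
      start := none
      accept := {s | ∀ b ∈ s, ¬ b} }, fun w => ?_⟩
  cases w with
  | nil => simp [DFA.mem_accepts, DFA.eval, DFA.evalFrom]
  | cons a w =>
    show List.foldl stp none (a :: w) ∈ {s : Option Prop | ∀ b ∈ s, ¬ b} ↔ _
    have : stp none a = some (q a) := rfl
    simp only [List.foldl_cons, this, key1]
    constructor
    · intro h b hb
      simp only [List.head?_cons, Option.mem_def, Option.some.injEq] at hb
      subst hb
      exact h _ rfl
    · intro h b hb
      simp only [Option.mem_def, Option.some.injEq] at hb
      subst hb
      exact h a rfl

/-- `z` is the word `w` padded on the left. -/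
def IsPad {A : Type} (z : List (Option A)) (w : List A) : Prop :=
  ∃ p : ℕ, z = List.replicate p none ++ w.map some

theorem IsPad.dropWhile {A : Type} {z : List (Option A)} {w : List A} (h : IsPad z w) :
    z.dropWhile Option.isNone = w.map some := by
  obtain ⟨p, rfl⟩ := h
  rw [List.dropWhile_append_of_pos (by simp)]
  cases w <;> simp

theorem isPad_iff {A : Type} {z : List (Option A)} {w : List A} :
    IsPad z w ↔ w.map some = z.dropWhile Option.isNone := by
  refine ⟨fun h => h.dropWhile.symm, fun h => ⟨(z.takeWhile Option.isNone).length, ?_⟩⟩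
  rw [h]
  conv_lhs => rw [← List.takeWhile_append_dropWhile (p := Option.isNone) (l := z)]
  congr 1
  rw [List.eq_replicate_iff]
  refine ⟨rfl, fun b hb => ?_⟩
  simpa using List.mem_takeWhile_imp hb

theorem IsPad.cons {A : Type} {z : List (Option A)} {w : List A} (p : ℕ) (h : IsPad z w) :
    IsPad (List.replicate p none ++ z) w := by
  obtain ⟨r, rfl⟩ := h
  exact ⟨p + r, by rw [List.replicate_add, List.append_assoc]⟩

theorem IsPad.inj {A : Type} {z : List (Option A)} {w w' : List A} (h : IsPad z w)
    (h' : IsPad z w') : w = w' := by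
  have := h.dropWhile.symm.trans h'.dropWhile
  exact List.map_injective_iff.2 (Option.some_injective A) this

theorem IsPad.length_le {A : Type} {z : List (Option A)} {w : List A} (h : IsPad z w) :
    w.length ≤ z.length := by
  obtain ⟨p, rfl⟩ := h
  simp

theorem IsPad.eq_padOne {A : Type} {z : List (Option A)} {w : List A} (h : IsPad z w) :
    z = padOne z.length w := by
  obtain ⟨p, rfl⟩ := h
  simp [padOne]

theorem padOne_isPad {A : Type} (N : ℕ) (w : List A) : IsPad (padOne N w) w := ⟨_, rfl⟩

theorem padOne_length {A : Type} {N : ℕ} {w : List A} (h : w.length ≤ N) :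
    (padOne N w).length = N := by
  simp [padOne]; omega

/-- Combine tracks into one word. -/
theorem exists_tracks {ι β : Type} (N : ℕ) (T : ι → List β) (h : ∀ i, (T i).length = N) :
    ∃ u : List (ι → β), u.length = N ∧ ∀ i, u.map (fun c => c i) = T i := by
  refine ⟨List.ofFn fun (j : Fin N) i => (T i)[j.val]'(by rw [h]; exact j.2), by simp, fun i => ?_⟩
  apply List.ext_getElem
  · simp [h]
  · intro n h1 h2
    simp

theorem tracks_ext {ι β : Type} {u w : List (ι → β)} (hl : u.length = w.length)
    (h : ∀ i, u.map (fun c => c i) = w.map (fun c => c i)) : u = w := by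
  apply List.ext_getElem hl
  intro n h1 h2
  funext i
  have := congrArg (fun l => l[n]?) (h i)
  simpa [h1, h2] using this

/-- `w` represents the tuple `v` (with extra padding allowed). -/
def Repr {A ι : Type} (S : ANS A) (w : List (ι → Option A)) (v : ι → ℕ) : Prop :=
  ∀ i, IsPad (w.map (fun c => c i)) (S.rep (v i))

/-- Promise version of recognizability. -/
def Rec {A ι : Type} (S : ANS A) (P : (ι → ℕ) → Prop) : Prop :=
  ∃ R : List (ι → Option A) → Prop, Reg R ∧ ∀ w v, Repr S w v → (R w ↔ P v)

theorem padTuple_length {A : Type} {d : ℕ} (ws : Fin d → List A) :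
    (padTuple ws).length = Finset.univ.sup fun i : Fin d => (ws i).length := by
  simp [padTuple]

theorem padTuple_track {A : Type} {d : ℕ} (ws : Fin d → List A) (i : Fin d) :
    (padTuple ws).map (fun c => c i) 
      = padOne (Finset.univ.sup fun i : Fin d => (ws i).length) (ws i) := by
  have hl : (ws i).length ≤ Finset.univ.sup fun i : Fin d => (ws i).length :=
    Finset.le_sup (f := fun i : Fin d => (ws i).length) (Finset.mem_univ i)
  apply List.ext_getElem
  · rw [List.length_map, padTuple_length, padOne_length hl]
  · intro n h1 h2
    simp only [padTuple, List.getElem_map, List.getElem_ofFn]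
    rw [List.getD_eq_getElem]

theorem padTuple_repr {A : Type} (S : ANS A) {d : ℕ} (v : Fin d → ℕ) :
    Repr S (padTuple fun i => S.rep (v i)) v := by
  intro i
  rw [padTuple_track]
  exact padOne_isPad _ _

theorem eq_padTuple {A : Type} (S : ANS A) {d : ℕ} {w : List (Fin d → Option A)} {v : Fin d → ℕ}
    (h : Repr S w v) (hh : ∀ a ∈ w.head?, ¬ a = fun _ => none) :
    w = padTuple fun i => S.rep (v i) := by
  have hl : w.length = Finset.univ.sup fun i : Fin d => (S.rep (v i)).length := by
    apply le_antisymm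
    · by_contra hlt
      push Not at hlt
      cases w with
      | nil => simp at hlt
      | cons a w =>
        apply hh a (by simp)
        funext i
        obtain ⟨p, hp⟩ := h i
        cases p with
        | succ p => 
          simp [List.replicate_succ] at hp
          exact hp.1
        | zero =>
          exfalso
          have h1 := congrArg List.length hp
          have : (S.rep (v i)).length ≤ Finset.univ.sup fun i : Fin d => (S.rep (v i)).length :=
            Finset.le_sup (f := fun i : Fin d => (S.rep (v i)).length) (Finset.mem_univ i)
          simp at h1
          rw [List.length_cons] at hlt
          omega
    · apply Finset.sup_le
      intro i _
      simpa using (h i).length_le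
  apply tracks_ext
  · rw [padTuple_length, hl]
  · intro i
    rw [padTuple_track, (h i).eq_padOne, List.length_map, hl]

theorem padTuple_head {A : Type} {d : ℕ} (ws : Fin d → List A) :
    ∀ a ∈ (padTuple ws).head?, ¬ a = fun _ => none := by
  intro a ha hn
  obtain ⟨l, hl⟩ : ∃ l, padTuple ws = a :: l := by
    cases h : padTuple ws with
    | nil => simp [h] at ha
    | cons b l => 
      simp [h] at ha
      exact ⟨l, by rw [ha]⟩
  have hlen := padTuple_length ws
  have hpos : 0 < (padTuple ws).length := by simp [hl]
  have hd : (Finset.univ : Finset (Fin d)).Nonempty := by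
    by_contra hne
    rw [Finset.not_nonempty_iff_eq_empty] at hne
    rw [hlen, hne] at hpos
    simp at hpos
  obtain ⟨i, _, hi⟩ := Finset.exists_mem_eq_sup _ hd (fun i : Fin d => (ws i).length)
  have ht := padTuple_track ws i
  rw [hi, hl, hn] at ht
  cases hw : ws i with
  | nil => 
    rw [hlen, hi, hw] at hpos
    simp at hpos
  | cons b u => simp [padOne, hw] at ht

theorem repr_dropWhile {A : Type} [Fintype A] (S : ANS A) {d : ℕ} {w : List (Fin d → Option A)}
    {v : Fin d → ℕ} (q : (Fin d → Option A) → Bool) (hq : ∀ c, q c = true ↔ c = fun _ => none)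
    (h : Repr S w v) :
    w.dropWhile q = padTuple fun i => S.rep (v i) := by
  apply eq_padTuple
  · intro i
    rw [isPad_iff, ← (h i).dropWhile]
    conv_lhs => rw [← List.takeWhile_append_dropWhile (p := q) (l := w)]
    rw [List.map_append, List.dropWhile_append_of_pos]
    intro b hb
    rw [List.mem_map] at hb
    obtain ⟨c, hc, rfl⟩ := hb
    have := (hq c).1 (List.mem_takeWhile_imp hc)
    simp [this]
  · intro a ha hn
    have := List.head?_dropWhile_not q w
    rw [Option.mem_def] at ha
    rw [ha] at this
    simp [(hq a).2 hn] at this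


theorem addable_reg {A : Type} {S : ANS A} (h : S.Addable) :
    Reg (fun w => ∃ t : Fin 3 → ℕ, t 0 + t 1 = t 2 ∧ w = padTuple fun i => S.rep (t i)) := h

/-- The language of an addable numeration system is regular. -/
theorem reg_lang {A : Type} {S : ANS A} (h : S.Addable) :
    Reg (fun u : List A => ∃ n, u = S.rep n) := by
  have h1 := (((addable_reg h).proj (fun c => c 2)).leftQuot
    {z | ∃ p : ℕ, z = List.replicate p none}).comap (some : A → Option A)
  refine h1.of_iff fun u => ?_
  constructor
  · rintro ⟨n, rfl⟩
    let t : Fin 3 → ℕ := ![n, 0, n]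
    obtain ⟨p, hp⟩ := padTuple_repr S t 2
    exact ⟨_, ⟨p, rfl⟩, _, hp, t, by simp [t], rfl⟩
  · rintro ⟨_, ⟨p, rfl⟩, W, hW, t, ht, rfl⟩
    refine ⟨t 2, ?_⟩
    exact IsPad.inj ⟨p, hW⟩ (padTuple_repr S t 2)

theorem reg_valid {A : Type} {S : ANS A} (h : S.Addable) :
    Reg (fun z : List (Option A) => ∃ n, IsPad z (S.rep n)) := by
  refine (((reg_lang h).proj some).dropWhile Option.isNone).of_iff fun z => ?_
  constructor
  · rintro ⟨n, hn⟩
    exact ⟨S.rep n, isPad_iff.1 hn, n, rfl⟩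
  · rintro ⟨u, hu, n, rfl⟩
    exact ⟨n, isPad_iff.2 hu⟩

section logic

variable {A : Type} {S : ANS A} {ι κ : Type}

theorem Rec.of_iff {P Q : (ι → ℕ) → Prop} (h : Rec S P) (e : ∀ v, Q v ↔ P v) : Rec S Q := by
  obtain ⟨R, hR, H⟩ := h
  exact ⟨R, hR, fun w v hw => (H w v hw).trans (e v).symm⟩

theorem Rec.bool {I : Type} [Fintype I] {P : I → (ι → ℕ) → Prop} (h : ∀ i, Rec S (P i))
    (F : (I → Prop) → Prop) : Rec S (fun v => F (fun i => P i v)) := by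
  choose R hR H using h
  refine ⟨_, Reg.bool hR F, fun w v hw => ?_⟩
  have : ∀ i, R i w = P i v := fun i => propext (H i w v hw)
  simp only [this]

theorem Rec.not {P : (ι → ℕ) → Prop} (h : Rec S P) : Rec S (fun v => ¬ P v) :=
  Rec.bool (I := Unit) (P := fun _ => P) (fun _ => h) (fun f => ¬ f ())

theorem Rec.and {P Q : (ι → ℕ) → Prop} (hP : Rec S P) (hQ : Rec S Q) :
    Rec S (fun v => P v ∧ Q v) := by
  have := Rec.bool (S := S) (I := Bool) (P := fun b => if b then P else Q)
    (by intro b; cases b <;> simpa) (fun f => f true ∧ f false)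
  simpa using this

theorem Rec.reindex {P : (ι → ℕ) → Prop} (h : Rec S P) (f : ι → κ) :
    Rec S (fun v : κ → ℕ => P (fun i => v (f i))) := by
  obtain ⟨R, hR, H⟩ := h
  refine ⟨_, hR.comap (fun c : κ → Option A => fun i => c (f i)), fun w v hw => ?_⟩
  apply H
  intro i
  simpa [List.map_map, Function.comp_def] using hw (f i)

theorem Rec.ex [Fintype κ] (hadd : S.Addable) {P : (ι ⊕ κ → ℕ) → Prop} (h : Rec S P) :
    Rec S (fun v : ι → ℕ => ∃ m : κ → ℕ, P (Sum.elim v m)) := by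
  obtain ⟨R, hR, H⟩ := h
  have hV : Reg (fun u : List (ι ⊕ κ → Option A) =>
      ∀ k : κ, ∃ n, IsPad (u.map (fun c => c (Sum.inr k))) (S.rep n)) :=
    Reg.bool (fun k : κ => (reg_valid hadd).comap (fun c : ι ⊕ κ → Option A => c (Sum.inr k)))
      (fun f => ∀ k, f k)
  have h1 := ((hV.and hR).proj (fun c : ι ⊕ κ → Option A => fun i => c (Sum.inl i))).leftQuot
    {z | ∃ p : ℕ, z = List.replicate p fun _ => none}
  refine ⟨_, h1, fun w v hw => ?_⟩
  constructor
  · rintro ⟨_, ⟨p, rfl⟩, u, hu, hval, hRu⟩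
    choose m hm using hval
    refine ⟨m, (H u _ ?_).1 hRu⟩
    rintro (i | k)
    · have := congrArg (List.map (fun c : ι → Option A => c i)) hu
      simp only [List.map_map, Function.comp_def, List.map_append, List.map_replicate] at this
      rw [this]
      exact (hw i).cons p
    · exact hm k
  · rintro ⟨m, hm⟩
    let N := max w.length (Finset.univ.sup fun k : κ => (S.rep (m k)).length)
    have hN : ∀ k, (S.rep (m k)).length ≤ N := fun k => le_max_of_le_right
      (Finset.le_sup (f := fun k : κ => (S.rep (m k)).length) (Finset.mem_univ k))
    have hN' : w.length ≤ N := le_max_left _ _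
    obtain ⟨u, hul, hu⟩ := exists_tracks (ι := ι ⊕ κ) N
      (Sum.elim (fun i => List.replicate (N - w.length) none ++ w.map (fun c => c i))
        (fun k => padOne N (S.rep (m k)))) (by
          rintro (i | k)
          · simp; omega
          · simpa using padOne_length (hN k))
    refine ⟨_, ⟨N - w.length, rfl⟩, u, ?_, fun k => ⟨m k, ?_⟩, ?_⟩
    · apply tracks_ext
      · simp [hul]; omega
      · intro i
        have := hu (Sum.inl i)
        simpa [List.map_map, Function.comp_def] using this
    · rw [hu (Sum.inr k)]
      exact padOne_isPad _ _
    · rw [H u (Sum.elim v m)]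
      · exact hm
      · rintro (i | k)
        · rw [hu (Sum.inl i)]
          exact (hw i).cons _
        · rw [hu (Sum.inr k)]
          exact padOne_isPad _ _

theorem Rec.ex1 (hadd : S.Addable) {P : (ι ⊕ Unit → ℕ) → Prop} (h : Rec S P) :
    Rec S (fun v : ι → ℕ => ∃ n : ℕ, P (Sum.elim v (fun _ => n))) := by
  refine (h.ex hadd).of_iff fun v => ?_
  constructor
  · rintro ⟨n, hn⟩
    exact ⟨_, hn⟩
  · rintro ⟨m, hm⟩
    exact ⟨m (), hm⟩

theorem Rec.all1 (hadd : S.Addable) {P : (ι ⊕ Unit → ℕ) → Prop} (h : Rec S P) :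
    Rec S (fun v : ι → ℕ => ∀ n : ℕ, P (Sum.elim v (fun _ => n))) := by
  refine (h.not.ex1 hadd).not.of_iff fun v => ?_
  simp

theorem rec_add [Fintype A] (hadd : S.Addable) (i j k : ι) :
    Rec S (fun v : ι → ℕ => v i + v j = v k) := by
  classical
  have h3 : Rec S (fun t : Fin 3 → ℕ => t 0 + t 1 = t 2) := by
    let q : (Fin 3 → Option A) → Bool := fun c => decide (c = fun _ => none)
    refine ⟨_, (addable_reg hadd).dropWhile q, fun w v hw => ?_⟩
    rw [repr_dropWhile S q (by simp [q]) hw]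
    constructor
    · rintro ⟨t, ht, he⟩
      have : v = t := by
        funext i
        apply S.inj
        have h1 := padTuple_repr S v i
        rw [he] at h1
        exact h1.inj (padTuple_repr S t i)
      rwa [this]
    · intro hv
      exact ⟨v, hv, rfl⟩
  exact h3.reindex ![i, j, k]

theorem rec_le [Fintype A] (hadd : S.Addable) (i j : ι) :
    Rec S (fun v : ι → ℕ => v i ≤ v j) := by
  refine ((rec_add hadd (Sum.inl i) (Sum.inr ()) (Sum.inl j)).ex1 hadd).of_iff fun v => ?_
  simp only [Sum.elim_inl, Sum.elim_inr]
  rw [le_iff_exists_add]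
  exact exists_congr fun _ => eq_comm

theorem rec_lt [Fintype A] (hadd : S.Addable) (i j : ι) :
    Rec S (fun v : ι → ℕ => v i < v j) :=
  (rec_le hadd j i).not.of_iff fun v => by simp

theorem rec_eq [Fintype A] (hadd : S.Addable) (i j : ι) :
    Rec S (fun v : ι → ℕ => v i = v j) :=
  ((rec_le hadd i j).and (rec_le hadd j i)).of_iff fun v => le_antisymm_iff

theorem rec_letter {C : Type} {x : ℕ → C} (hx : SAutomatic S x) (i : ι) (c : C) :
    Rec S (fun v : ι → ℕ => x (v i) = c) := by
  obtain ⟨Q, hQ, M, τ, hM⟩ := hx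
  let M' : DFA (Option A) Q :=
    { step := fun s a => match a with
        | none => s
        | some a => M.step s a
      start := M.start
      accept := {s | τ s = c} }
  have hR : Reg (fun z => z ∈ M'.accepts) := ⟨Q, hQ, M', fun w => Iff.rfl⟩
  refine ⟨_, hR.comap (fun c : ι → Option A => c i), fun w v hw => ?_⟩
  obtain ⟨p, hp⟩ := hw i
  show _ ↔ x (v i) = c
  rw [hp, ← hM]
  have k1 : ∀ p s, M'.evalFrom s (List.replicate p none) = s := by
    intro p
    induction p with
    | zero => intro s; rfl
    | succ p ih => intro s; rw [List.replicate_succ, DFA.evalFrom_cons]; exact ih s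
  have k2 : ∀ (u : List A) s, M'.evalFrom s (u.map some) = M.evalFrom s u := by
    intro u
    induction u with
    | nil => intro s; rfl
    | cons a u ih => intro s; rw [List.map_cons, DFA.evalFrom_cons, DFA.evalFrom_cons]; exact ih _
  rw [DFA.mem_accepts, DFA.eval, DFA.evalFrom_of_append, k1, k2]
  rfl

theorem rec_letter_add [Fintype A] {C : Type} {x : ℕ → C} (hadd : S.Addable)
    (hx : SAutomatic S x) (i j : ι) (c : C) :
    Rec S (fun v : ι → ℕ => x (v i + v j) = c) := by
  refine (((rec_add hadd (Sum.inl i) (Sum.inl j) (Sum.inr ())).and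
    (rec_letter hx (Sum.inr ()) c)).ex1 hadd).of_iff fun v => ?_
  simp

theorem rec_agree [Fintype A] {C : Type} [Fintype C] {x : ℕ → C} (hadd : S.Addable)
    (hx : SAutomatic S x) (a b i : ι) :
    Rec S (fun v : ι → ℕ => ∀ j < v i, x (v b + j) = x (v a + j)) := by
  have h1 : Rec S (fun v : ι ⊕ Unit → ℕ => 
      x (v (Sum.inl b) + v (Sum.inr ())) = x (v (Sum.inl a) + v (Sum.inr ()))) := by
    refine (Rec.bool (S := S) (I := C ⊕ C) (P := Sum.elim
      (fun c v => x (v (Sum.inl b) + v (Sum.inr ())) = c)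
      (fun c v => x (v (Sum.inl a) + v (Sum.inr ())) = c)) ?_
      (fun f => ∃ c, f (Sum.inl c) ∧ f (Sum.inr c))).of_iff fun v => ?_
    · rintro (c | c)
      · exact rec_letter_add hadd hx _ _ c
      · exact rec_letter_add hadd hx _ _ c
    · simp [eq_comm]
  refine (((rec_lt hadd (Sum.inr ()) (Sum.inl i)).and h1.not).not.all1 hadd).of_iff fun v => ?_
  simp

theorem Rec.recognizable (hadd : S.Addable) {d : ℕ} {P : (Fin d → ℕ) → Prop} (h : Rec S P) :
    S.Recognizable {t | P t} := by
  obtain ⟨R, hR, H⟩ := h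
  have hV : Reg (fun u : List (Fin d → Option A) =>
      ∀ k, ∃ n, IsPad (u.map (fun c => c k)) (S.rep n)) :=
    Reg.bool (fun k => (reg_valid hadd).comap (fun c : Fin d → Option A => c k))
      (fun f => ∀ k, f k)
  refine ((hV.and hR).and (Reg.head (fun c => c = fun _ => none))).of_iff fun w => ?_
  constructor
  · rintro ⟨t, ht, rfl⟩
    exact ⟨⟨fun k => ⟨t k, padTuple_repr S t k⟩, (H _ _ (padTuple_repr S t)).2 ht⟩,
      padTuple_head _⟩
  · rintro ⟨⟨hv, hr⟩, hh⟩
    choose v hv using hv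
    exact ⟨v, (H w v hv).1 hr, eq_padTuple S hv hh⟩

end logic

/-- The first-order form of membership in the winning shift. -/
def Good {C : Type} (x : ℕ → C) (k : ℕ) (t : Fin k → ℕ) : Prop :=
  ∃ m : Fin (2 ^ k) → ℕ, ∀ i : ℕ, ∀ a : Fin (2 ^ k),
    Set.ncard {c : C | ∃ b, (∀ j < i, x (m b + j) = x (m a + j)) ∧ x (m b + i) = c}
      = Set.ncard {l : Fin k | t l = i} + 1

theorem rec_good {A C : Type} [Fintype A] [Fintype C] {S : ANS A} (hadd : S.Addable)
    {x : ℕ → C} (hx : SAutomatic S x) (k : ℕ) : Rec S (Good x k) := by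
  let K := Fin (2 ^ k)
  let P : (K × K) ⊕ (K × C) ⊕ Fin k → ((Fin k ⊕ K) ⊕ Unit → ℕ) → Prop :=
    Sum.elim (fun ab v => ∀ j < v (Sum.inr ()), 
        x (v (Sum.inl (Sum.inr ab.2)) + j) = x (v (Sum.inl (Sum.inr ab.1)) + j))
      (Sum.elim (fun bc v => x (v (Sum.inl (Sum.inr bc.1)) + v (Sum.inr ())) = bc.2)
        (fun l v => v (Sum.inl (Sum.inl l)) = v (Sum.inr ())))
  have hP : ∀ i, Rec S (P i) := by
    rintro (ab | bc | l)
    · exact rec_agree hadd hx _ _ _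
    · exact rec_letter_add hadd hx _ _ _
    · exact rec_eq hadd _ _
  have h1 := Rec.bool hP (fun f => ∀ a : K, 
    Set.ncard {c : C | ∃ b, f (Sum.inl (a, b)) ∧ f (Sum.inr (Sum.inl (b, c)))}
      = Set.ncard {l : Fin k | f (Sum.inr (Sum.inr l))} + 1)
  exact ((h1.all1 hadd).ex hadd).of_iff fun v => Iff.rfl

theorem rec_mono {A : Type} [Fintype A] {S : ANS A} (hadd : S.Addable) (k : ℕ) :
    Rec S (fun t : Fin k → ℕ => Monotone t) :=
  Rec.bool (I := Fin k × Fin k) (P := fun ij t => t ij.1 ≤ t ij.2)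
    (fun ij => rec_le hadd _ _) (fun f => ∀ i j, i ≤ j → f (i, j))


/-- Prefix of length `n` of an infinite word. -/
def pre {C : Type} (y : ℕ → C) (n : ℕ) : List C := List.ofFn fun i : Fin n => y i

theorem pre_length {C : Type} (y : ℕ → C) (n : ℕ) : (pre y n).length = n := by simp [pre]

theorem pre_succ {C : Type} (y : ℕ → C) (n : ℕ) : pre y (n + 1) = pre y n ++ [y n] := by
  rw [pre, List.ofFn_succ']
  simp [pre]

theorem pre_eq_iff {C : Type} (y z : ℕ → C) (n : ℕ) :
    pre y n = pre z n ↔ ∀ j < n, y j = z j := by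
  constructor
  · intro h j hj
    have := congrArg (fun l => l[j]?) h
    simpa [pre, hj] using this
  · intro h
    apply List.ext_getElem
    · simp [pre]
    · intro j h1 h2
      simpa [pre] using h j (by simpa [pre] using h1)

theorem pre_prefix {C : Type} (y : ℕ → C) {n m : ℕ} (h : n ≤ m) : ∃ v, pre y m = pre y n ++ v := by
  induction m, h using Nat.le_induction with
  | base => exact ⟨[], by simp⟩
  | succ m _ ih =>
    obtain ⟨v, hv⟩ := ih
    exact ⟨v ++ [y m], by rw [pre_succ, hv, List.append_assoc]⟩

/-- Every node extends to a branch. -/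
theorem exists_branch {C : Type} {T : Set (List C)} (hpre : ∀ u v : List C, u ++ v ∈ T → u ∈ T)
    (hext : ∀ w ∈ T, ∃ c, w ++ [c] ∈ T) {w : List C} (hw : w ∈ T) :
    ∃ y : ℕ → C, (∀ n, pre y n ∈ T) ∧ pre y w.length = w := by
  classical
  obtain ⟨c0, -⟩ := hext w hw
  have : Nonempty C := ⟨c0⟩
  choose! f hf using hext
  let L : ℕ → List C := fun n => Nat.rec w (fun _ l => l ++ [f l]) n
  have hL0 : L 0 = w := rfl
  have hLs : ∀ n, L (n + 1) = L n ++ [f (L n)] := fun n => rfl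
  have hLT : ∀ n, L n ∈ T := by
    intro n
    induction n with
    | zero => exact hw
    | succ n ih => rw [hLs]; exact hf _ ih
  have hlen : ∀ n, (L n).length = w.length + n := by
    intro n
    induction n with
    | zero => rfl
    | succ n ih => rw [hLs, List.length_append, ih]; rfl
  have hmono : ∀ n m, n ≤ m → L n <+: L m := by
    intro n m h
    induction m, h using Nat.le_induction with
    | base => exact List.prefix_rfl
    | succ m _ ih => exact ih.trans (by rw [hLs]; exact List.prefix_append _ _)
  let y : ℕ → C := fun j => (L (j + 1)).getD j c0
  have hy : ∀ n j, j < (L n).length → (L n)[j]? = some (y j) := by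
    intro n j hj
    have hj2 : j < (L (j + 1)).length :=
      lt_of_lt_of_eq (by omega : j < w.length + (j + 1)) (hlen (j + 1)).symm
    have e2 : (L (j + 1))[j]? = some (y j) := by
      simp only [y, List.getD_eq_getElem _ _ hj2]
      exact List.getElem?_eq_getElem hj2
    rw [← e2]
    rcases le_total n (j + 1) with h | h
    · rw [List.getElem?_eq_getElem hj, List.getElem?_eq_getElem hj2, (hmono _ _ h).getElem hj]
    · rw [List.getElem?_eq_getElem hj, List.getElem?_eq_getElem hj2, (hmono _ _ h).getElem hj2]
  have hpL : ∀ n, pre y (L n).length = L n := by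
    intro n
    apply List.ext_getElem
    · rw [pre_length]
    · intro j h1 h2
      have := hy n j h2
      rw [List.getElem?_eq_getElem h2] at this
      simpa [pre] using (Option.some.inj this).symm
  refine ⟨y, fun n => ?_, hpL 0⟩
  obtain ⟨v, hv⟩ := pre_prefix y (n := n) (m := (L n).length) (by rw [hlen]; omega)
  apply hpre _ v
  rw [← hv, hpL]
  exact hLT n

theorem level_card {C : Type} [Fintype C] {T : Set (List C)} {α : ℕ → ℕ}
    (h0 : [] ∈ T) (hpre : ∀ u v : List C, u ++ v ∈ T → u ∈ T)
    (hc : ∀ w ∈ T, Set.ncard { c : C | w ++ [c] ∈ T } = α w.length + 1) (n : ℕ) :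
    ∃ F : Finset (List C), (∀ w, w ∈ F ↔ w ∈ T ∧ w.length = n) ∧
      F.card ≤ 2 ^ (∑ i ∈ Finset.range n, α i) := by
  classical
  induction n with
  | zero =>
    refine ⟨{[]}, fun w => ?_, by simp⟩
    simp only [Finset.mem_singleton, List.length_eq_zero_iff]
    constructor
    · rintro rfl
      exact ⟨h0, rfl⟩
    · exact fun h => h.2
  | succ n ih =>
    obtain ⟨F, hF, hFc⟩ := ih
    let G : List C → Finset (List C) := fun w =>
      (Finset.univ.filter fun c => w ++ [c] ∈ T).image fun c => w ++ [c]
    refine ⟨F.biUnion G, fun w => ?_, ?_⟩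
    · simp only [Finset.mem_biUnion, G, Finset.mem_image, Finset.mem_filter, Finset.mem_univ,
        true_and]
      constructor
      · rintro ⟨u, hu, c, hcT, rfl⟩
        refine ⟨hcT, ?_⟩
        rw [List.length_append, ((hF u).1 hu).2]
        rfl
      · rintro ⟨hw, hl⟩
        rcases List.eq_nil_or_concat w with rfl | ⟨u, c, rfl⟩
        · simp at hl
        · rw [List.concat_eq_append] at *
          refine ⟨u, (hF u).2 ⟨hpre _ _ hw, by simpa using hl⟩, c, hw, rfl⟩
    · have hG : ∀ w ∈ F, (G w).card ≤ α n + 1 := by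
        intro w hw
        obtain ⟨hwT, hwl⟩ := (hF w).1 hw
        have := hc w hwT
        rw [hwl] at this
        rw [← this, Set.ncard_eq_toFinset_card']
        refine Finset.card_image_le.trans (le_of_eq ?_)
        congr 1
        ext c
        simp
      calc (F.biUnion G).card ≤ F.card * (α n + 1) := Finset.card_biUnion_le_card_mul _ _ _ hG
        _ ≤ 2 ^ (∑ i ∈ Finset.range n, α i) * 2 ^ (α n) :=
          Nat.mul_le_mul hFc (Nat.lt_two_pow_self)
        _ = _ := by rw [Finset.sum_range_succ, pow_add]

theorem sum_count_le {k : ℕ} (t : Fin k → ℕ) (n : ℕ) :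
    ∑ i ∈ Finset.range n, Set.ncard {l : Fin k | t l = i} ≤ k := by
  classical
  have h1 : ∀ i, Set.ncard {l : Fin k | t l = i} = (Finset.univ.filter fun l => t l = i).card := by
    intro i
    rw [Set.ncard_eq_toFinset_card']
    congr 1
    ext l
    simp
  simp only [h1]
  rw [← Finset.card_biUnion]
  · exact (Finset.card_le_univ _).trans (by simp)
  · intro i _ j _ hij
    rw [Function.onFun, Finset.disjoint_left]
    intro l hl hl'
    simp at hl hl'
    exact hij (hl.symm.trans hl')

theorem good_of_winning {C : Type} [Fintype C] (x : ℕ → C) (k : ℕ) (t : Fin k → ℕ)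
    (h : (fun j => Set.ncard { i : Fin k | t i = j }) ∈ winningShift (orbitClosure x)) :
    Good x k t := by
  classical
  obtain ⟨T, h0, hpre, hc, hbr⟩ := h
  have hext : ∀ w ∈ T, ∃ c, w ++ [c] ∈ T := by
    intro w hw
    have h1 := hc w hw
    have : Set.Nonempty { c : C | w ++ [c] ∈ T } := by
      apply Set.nonempty_of_ncard_ne_zero
      rw [h1]
      omega
    exact this
  let N := (Finset.univ.sup t) + 1
  have hN : ∀ l, t l < N := fun l => Nat.lt_succ_of_le (Finset.le_sup (Finset.mem_univ l))
  obtain ⟨F, hF, hFc⟩ := level_card (α := fun j => Set.ncard { i : Fin k | t i = j }) h0 hpre hc N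
  have hFc' : F.card ≤ 2 ^ k := hFc.trans (Nat.pow_le_pow_right (by norm_num) (sum_count_le t N))
  have hpos : ∀ w, w ∈ F → ∃ m, pre (fun j => x (m + j)) N = w := by
    intro w hw
    obtain ⟨hwT, hwl⟩ := (hF w).1 hw
    obtain ⟨y, hy, hyw⟩ := exists_branch hpre hext hwT
    obtain ⟨m, hm⟩ := hbr y hy N
    refine ⟨m, ?_⟩
    rw [← hyw, hwl, pre_eq_iff]
    exact fun j hj => (hm j hj).symm
  have hFne : F.Nonempty := by
    obtain ⟨y, hy, -⟩ := exists_branch hpre hext h0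
    exact ⟨pre y N, (hF _).2 ⟨hy N, pre_length _ _⟩⟩
  choose! g hg using hpos
  obtain ⟨e, heF, hes⟩ : ∃ e : Fin (2 ^ k) → List C, (∀ b, e b ∈ F) ∧ ∀ w ∈ F, ∃ b, e b = w := by
    obtain ⟨w0, hw0⟩ := hFne
    let s : Fin F.card ≃ F := F.equivFin.symm
    refine ⟨fun b => if hb : b.val < F.card then s ⟨b.val, hb⟩ else w0, fun b => ?_, fun w hw => ?_⟩
    · dsimp only
      split_ifs
      · exact (s _).2
      · exact hw0
    · refine ⟨⟨(F.equivFin ⟨w, hw⟩).val, lt_of_lt_of_le (F.equivFin ⟨w, hw⟩).2 hFc'⟩, ?_⟩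
      simp [s]
  have hpe : ∀ b, pre (fun j => x (g (e b) + j)) N = e b := fun b => hg _ (heF b)
  refine ⟨fun b => g (e b), fun i a => ?_⟩
  rcases lt_or_ge i N with hi | hi
  · have hiT : ∀ b n, n ≤ N → pre (fun j => x (g (e b) + j)) n ∈ T := by
      intro b n hn
      obtain ⟨v, hv⟩ := pre_prefix (fun j => x (g (e b) + j)) hn
      apply hpre _ v
      rw [← hv, hpe]
      exact ((hF _).1 (heF b)).1
    have h1 := hc _ (hiT a i hi.le)
    rw [pre_length] at h1
    rw [← h1]
    congr 1
    ext c
    constructor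
    · rintro ⟨b, hb, rfl⟩
      show _ ∈ T
      rw [← (pre_eq_iff (fun j => x (g (e b) + j)) (fun j => x (g (e a) + j)) i).2 hb]
      have := hiT b (i + 1) hi
      rwa [pre_succ] at this
    · intro hcT
      obtain ⟨y, hy, hyw⟩ := exists_branch hpre hext hcT
      obtain ⟨b, hb⟩ := hes (pre y N) ((hF _).2 ⟨hy N, pre_length _ _⟩)
      have hb2 := hpe b
      rw [hb, pre_eq_iff] at hb2
      rw [List.length_append, pre_length, List.length_singleton, pre_succ] at hyw
      obtain ⟨e1, e2⟩ := List.append_inj' hyw rfl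
      rw [pre_eq_iff] at e1
      refine ⟨b, fun j hj => ?_, ?_⟩
      · show x (g (e b) + j) = x (g (e a) + j)
        rw [← e1 j hj, hb]
        exact hb2 j (hj.trans hi)
      · have e3 : y i = c := by simpa using e2
        show x (g (e b) + i) = c
        rw [← e3, hb]
        exact hb2 i hi
  · have hz : {l : Fin k | t l = i} = ∅ := by
      ext l
      have := hN l
      simp
      omega
    have hs : {c : C | ∃ b, (∀ j < i, x (g (e b) + j) = x (g (e a) + j)) ∧ x (g (e b) + i) = c}
        = {x (g (e a) + i)} := by
      ext c
      constructor
      · rintro ⟨b, hb, rfl⟩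
        have : e b = e a := by
          rw [← hpe b, ← hpe a, pre_eq_iff]
          exact fun j hj => hb j (lt_of_lt_of_le hj hi)
        rw [this]
        rfl
      · rintro rfl
        exact ⟨a, fun _ _ => rfl, rfl⟩
    rw [hz, Set.ncard_empty, hs, Set.ncard_singleton]

theorem winning_of_good {C : Type} (x : ℕ → C) (k : ℕ) (t : Fin k → ℕ) (h : Good x k t) :
    (fun j => Set.ncard { i : Fin k | t i = j }) ∈ winningShift (orbitClosure x) := by
  obtain ⟨m, hm⟩ := h
  have hsp : ∀ (y : ℕ → C) (u : List C) (c : C), u ++ [c] = pre y (u ++ [c]).length ↔ 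
      u = pre y u.length ∧ y u.length = c := by
    intro y u c
    rw [List.length_append, List.length_singleton, pre_succ]
    constructor
    · intro h
      obtain ⟨e1, e2⟩ := List.append_inj' h rfl
      exact ⟨e1, by simpa using e2.symm⟩
    · rintro ⟨h1, h2⟩
      rw [h2, ← h1]
  refine ⟨{w | ∃ b, w = pre (fun j => x (m b + j)) w.length}, ?_, ?_, ?_, ?_⟩
  · exact ⟨⟨0, by positivity⟩, rfl⟩
  · rintro u v ⟨b, hb⟩
    refine ⟨b, ?_⟩
    obtain ⟨v', hv'⟩ := pre_prefix (fun j => x (m b + j)) (n := u.length) (m := (u ++ v).length)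
      (by simp)
    rw [hv'] at hb
    exact (List.append_inj hb (by rw [pre_length])).1
  · rintro w ⟨a, ha⟩
    rw [← hm w.length a]
    congr 1
    ext c
    refine exists_congr fun b => ?_
    rw [hsp, ← pre_eq_iff (fun j => x (m b + j)) (fun j => x (m a + j)), ← ha, eq_comm (a := w)]
  · intro y hy n
    obtain ⟨b, hb⟩ := hy n
    change pre y n = pre _ (pre y n).length at hb
    rw [pre_length, pre_eq_iff] at hb
    exact ⟨m b, hb⟩

end WSC

/-- If `S` is an addable ANS and `x` is an `S`-automatic word over a finite
alphabet, then the winning shift of the subshift generated by `x` is weakly `S`-codable. -/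
theorem stmt1 {A C : Type} [Fintype A] [Fintype C] (S : ANS A) (hadd : S.Addable)
    (x : ℕ → C) (hx : SAutomatic S x) :
    WeaklySCodable S (winningShift (orbitClosure x)) := by
  intro k
  refine WSC.Rec.recognizable hadd
    (P := fun t => Monotone t ∧
      (fun j => Set.ncard { i : Fin k | t i = j }) ∈ winningShift (orbitClosure x)) ?_
  exact ((WSC.rec_mono hadd k).and (WSC.rec_good hadd hx k)).of_iff fun t =>
    and_congr_right fun _ => ⟨WSC.good_of_winning x k t, WSC.winning_of_good x k t⟩
end
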